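/- Fix π̃ ∈ Π̃ and suppose Q ≪ P_0 is a probability measure invariant for the environment kernel R_{π̃}. If A = {ω : dQ/dP_0(ω) > 0}, then A is invariant under the kernel R_π of the simple random walk on the cluster (if ω_1 is sampled from P_0(·|A) and then ω_2 from π(ω_1,·), then ω_2 ∈ A almost surely), and hence, by ergodicity of P_0 for R_π, P_0(A) = 1, i.e. Q and P_0 are mutually absolutely continuous. -/

import Mathlib

open MeasureTheory ProbabilityTheory Filter Topology
open scoped ENNReal NNReal BigOperators

noncomputable section

namespace SRWPC

/-- Vertices of the lattice `ℤ^d`. -/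
abbrev V (d : ℕ) := Fin d → ℤ

/-- Index of a nearest-neighbour bond: the bond from `x` to `x + eᵢ`. -/
abbrev EdgeIx (d : ℕ) := V d × Fin d

/-- Percolation configurations `Ω = {0,1}^{𝔹_d}`. -/
abbrev Config (d : ℕ) := EdgeIx d → Bool

/-- The `i`-th coordinate unit vector. -/
def unitVec (d : ℕ) (i : Fin d) : V d := fun j => if j = i then 1 else 0

/-- The set `𝕌_d` of the `2d` unit vectors. -/
def Ud (d : ℕ) : Finset (V d) :=
  (Finset.univ.image (unitVec d)) ∪ (Finset.univ.image (fun i => -unitVec d i))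

/-- The type of nearest-neighbour steps (elements of `𝕌_d`). -/
abbrev Step (d : ℕ) := {e : V d // e ∈ Ud d}

/-- The shift `(τ_x ω)_b = ω_{x+b}`. -/
def shift {d : ℕ} (x : V d) (ω : Config d) : Config d := fun b => ω (b.1 + x, b.2)

/-- The bond from `x` to `x + e` is open in `ω`. -/
def edgeOpen {d : ℕ} (ω : Config d) (x e : V d) : Prop :=
  ∃ i : Fin d, (e = unitVec d i ∧ ω (x, i) = true) ∨
    (e = -unitVec d i ∧ ω (x - unitVec d i, i) = true)

open Classical in
/-- The number of open bonds incident to `x`. -/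
def openDeg {d : ℕ} (ω : Config d) (x : V d) : ℕ :=
  ((Ud d).filter (fun e => edgeOpen ω x e)).card

open Classical in
/-- The transition probability `π_ω(x,e)` of the simple random walk on the cluster. -/
def trans {d : ℕ} (ω : Config d) (x e : V d) : ℝ :=
  if edgeOpen ω x e then 1 / openDeg ω x else 0

/-- `γ` restricted to `{0,…,n}` is a nearest-neighbour open path in `ω`. -/
def IsOpenPath {d : ℕ} (ω : Config d) (γ : ℕ → V d) (n : ℕ) : Prop :=
  ∀ k < n, (γ (k + 1) - γ k) ∈ Ud d ∧ edgeOpen ω (γ k) (γ (k + 1) - γ k)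

/-- `x` lies in the box `[-r,r]^d`. -/
def inBox {d : ℕ} (x : V d) (r : ℝ) : Prop := ∀ i, |(x i : ℝ)| ≤ r

/-- `x` is joined to infinity by a nearest-neighbour open path, i.e. `x ∈ 𝒞_∞(ω)`. -/
def memCluster {d : ℕ} (ω : Config d) (x : V d) : Prop :=
  ∀ R : ℕ, ∃ (γ : ℕ → V d) (n : ℕ), γ 0 = x ∧ IsOpenPath ω γ n ∧ ¬ inBox (γ n) R

/-- The event `Ω_0 = {0 ∈ 𝒞_∞}`. -/
def cluZero (d : ℕ) : Set (Config d) := {ω | memCluster ω 0}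

/-- `P` is the Bernoulli bond percolation product measure with parameter `q`. -/
def IsBernoulli (d : ℕ) (q : ℝ) (P : Measure (Config d)) : Prop :=
  IsProbabilityMeasure P ∧
    ∀ (F : Finset (EdgeIx d)) (a : EdgeIx d → Bool),
      P {ω | ∀ b ∈ F, ω b = a b} = ∏ b ∈ F, ENNReal.ofReal (if a b then q else 1 - q)

/-- The critical probability `p_c(d)` of bond percolation on `ℤ^d`. -/
def pc (d : ℕ) : ℝ :=
  sInf {q : ℝ | q ∈ Set.Icc (0 : ℝ) 1 ∧
    ∀ P : Measure (Config d), IsBernoulli d q P → 0 < P (cluZero d)}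

variable {d : ℕ}

/-- Position of the walk after `k` steps, given the sequence of steps `s`. -/
def pos {n : ℕ} (s : Fin n → Step d) (k : ℕ) : V d :=
  ∑ j ∈ Finset.univ.filter (fun j : Fin n => (j : ℕ) < k), (s j).1

/-- The environment/step pair `(τ_{X_k} ω, X_{k+1} - X_k)` seen at time `k`. -/
def envPair (ω : Config d) {n : ℕ} (s : Fin n → Step d) (k : Fin n) : Config d × Step d :=
  (shift (pos s k) ω, s k)

/-- Quenched probability of a given sequence of `n` steps under the Markov kernel `κ`. -/
def pathProb (κ : Config d → Step d → ℝ) (ω : Config d) {n : ℕ} (s : Fin n → Step d) : ℝ :=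
  ∏ k : Fin n, κ (shift (pos s k) ω) (s k)

/-- The SRWPC transition kernel `π`. -/
def srw (d : ℕ) : Config d → Step d → ℝ := fun ω e => trans ω 0 e.1

/-- Quenched expectation (under `P_0^{κ,ω}`) of a functional of the first `n` steps. -/
def qE (κ : Config d → Step d → ℝ) (ω : Config d) {n : ℕ} (F : (Fin n → Step d) → ℝ) : ℝ :=
  ∑ s : Fin n → Step d, pathProb κ ω s * F s

/-- Quenched probability (under `P_0^{κ,ω}`) of a set of `n`-step trajectories. -/
def qP (κ : Config d → Step d → ℝ) (ω : Config d) {n : ℕ} (A : Set (Fin n → Step d)) : ℝ :=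
  ∑ s : Fin n → Step d, A.indicator (fun s' => pathProb κ ω s') s

/-- Quenched probability, `ℝ≥0∞`-valued. -/
def qPE (κ : Config d → Step d → ℝ) (ω : Config d) {n : ℕ} (A : Set (Fin n → Step d)) : ℝ≥0∞ :=
  ENNReal.ofReal (qP κ ω A)

/-- The environment-step space `Ω_0 × 𝕌_d`. -/
abbrev EnvSp (d : ℕ) := Config d × Step d

/-- The pair empirical measure `ℒ_n` as a measure. -/
def empMeas (ω : Config d) {n : ℕ} (s : Fin n → Step d) : Measure (EnvSp d) :=
  (n : ℝ≥0∞)⁻¹ • ∑ k : Fin n, Measure.dirac (envPair ω s k)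

lemma empMeas_isProb (ω : Config d) {n : ℕ} (hn : n ≠ 0) (s : Fin n → Step d) :
    IsProbabilityMeasure (empMeas ω s) := by
  constructor
  simp only [empMeas, Measure.smul_apply, Measure.coe_finset_sum, Finset.sum_apply,
    Measure.dirac_apply_of_mem (Set.mem_univ _), smul_eq_mul]
  rw [Finset.sum_const, Finset.card_univ, Fintype.card_fin, nsmul_eq_mul, mul_one,
    ENNReal.inv_mul_cancel]
  · exact_mod_cast hn
  · exact ENNReal.natCast_ne_top n

/-- The pair empirical measure `ℒ_{n+1}` as a probability measure. -/
def empPM (ω : Config d) {n : ℕ} (s : Fin (n + 1) → Step d) : ProbabilityMeasure (EnvSp d) :=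
  ⟨empMeas ω s, empMeas_isProb ω (Nat.succ_ne_zero n) s⟩

/-- First marginal `(μ)_1` of a measure on `Ω_0 × 𝕌_d`. -/
def marg1 (μ : Measure (EnvSp d)) : Measure (Config d) := μ.map Prod.fst

/-- Second marginal `(μ)_2` of a measure on `Ω_0 × 𝕌_d`. -/
def marg2 (μ : Measure (EnvSp d)) : Measure (Config d) := μ.map (fun q => shift q.2.1 q.1)

/-- The slice `dμ(·, e)` of a measure on `Ω_0 × 𝕌_d` at a fixed step `e`. -/
def slice (μ : Measure (EnvSp d)) (e : Step d) : Measure (Config d) :=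
  (μ.restrict (Set.univ ×ˢ {e})).map Prod.fst

/-- The space `ℳ_1⋆`: probability measures on `Ω_0 × 𝕌_d` whose two marginals coincide and
are absolutely continuous w.r.t. `P₀`, and whose densities `dμ(ω,e)/d(μ)_1(ω)` are positive
precisely on open edges, `P₀`-a.s. -/
def M1star (d : ℕ) (P₀ : Measure (Config d)) : Set (ProbabilityMeasure (EnvSp d)) :=
  {μ | marg1 μ.toMeasure = marg2 μ.toMeasure ∧ marg1 μ.toMeasure ≪ P₀ ∧
    ∃ ρ : Step d → Config d → ℝ≥0∞, (∀ e, Measurable (ρ e)) ∧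
      (∀ e, slice μ.toMeasure e = (marg1 μ.toMeasure).withDensity (ρ e)) ∧
      (∀ e : Step d, ∀ᵐ ω ∂P₀, (0 < ρ e ω ↔ edgeOpen ω 0 e.1))}

/-- The reference measure `π_ω(0,e) d(μ)_1(ω)` on `Ω_0 × 𝕌_d`. -/
def refM (μ : Measure (EnvSp d)) : Measure (EnvSp d) :=
  Measure.sum (fun e : Step d =>
    ((marg1 μ).withDensity (fun ω => ENNReal.ofReal (trans ω 0 e.1))).map (fun ω => (ω, e)))

/-- `x log x - x + 1`. -/
def klFun (x : ℝ) : ℝ := x * Real.log x - x + 1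

open Classical in
/-- The entropy functional `ℑ` (a relative entropy with respect to `refM μ`;
it equals `∫ Σ_e dμ(ω,e) log[dμ(ω,e) / (d(μ)_1(ω) π_ω(0,e))]` on `ℳ_1⋆` and `∞` otherwise). -/
def entI (P₀ : Measure (Config d)) (μ : ProbabilityMeasure (EnvSp d)) : ℝ≥0∞ :=
  if μ ∈ M1star d P₀ ∧ μ.toMeasure ≪ refM μ.toMeasure then
    ∫⁻ q, ENNReal.ofReal (klFun ((μ.toMeasure.rnDeriv (refM μ.toMeasure)) q).toReal)
      ∂(refM μ.toMeasure)
  else ∞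

/-- The pairing `⟨f, μ⟩`. -/
def pairing (f : EnvSp d → ℝ) (μ : ProbabilityMeasure (EnvSp d)) : ℝ :=
  ∫ q, f q ∂μ.toMeasure

/-- The Fenchel–Legendre transform `ℑ⋆` of `ℑ`. -/
def entIstar (P₀ : Measure (Config d)) (f : BoundedContinuousFunction (EnvSp d) ℝ) : EReal :=
  ⨆ μ : ProbabilityMeasure (EnvSp d),
    ((pairing f μ : ℝ) : EReal) - ((entI P₀ μ : ℝ≥0∞) : EReal)

/-- The double Fenchel–Legendre transform `ℑ⋆⋆` of `ℑ`. -/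
def entIbis (P₀ : Measure (Config d)) (μ : ProbabilityMeasure (EnvSp d)) : EReal :=
  ⨆ f : BoundedContinuousFunction (EnvSp d) ℝ,
    ((pairing f μ : ℝ) : EReal) - entIstar P₀ f

/-- The contraction map `ξ(μ) = ∫ Σ_e e dμ(ω,e)`. -/
def xi (μ : ProbabilityMeasure (EnvSp d)) : Fin d → ℝ :=
  fun i => ∫ q, ((q.2.1 i : ℤ) : ℝ) ∂μ.toMeasure

/-- The mean velocity `X_n / n` of a trajectory. -/
def meanVel {n : ℕ} (s : Fin n → Step d) : Fin d → ℝ :=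
  fun i => (n : ℝ)⁻¹ * ((pos s n) i : ℝ)

/-- The class `Π̃` of environment transition kernels. -/
def PiT (d : ℕ) (P₀ : Measure (Config d)) : Set (Config d → Step d → ℝ) :=
  {κ | (∀ e : Step d, Measurable (fun ω => κ ω e)) ∧
    (∀ ω e, 0 ≤ κ ω e) ∧ (∀ e : Step d, ∀ᵐ ω ∂P₀, κ ω e ≤ 1) ∧
    (∀ᵐ ω ∂P₀, ∑ e : Step d, κ ω e = 1) ∧
    (∀ e : Step d, ∀ᵐ ω ∂P₀, (κ ω e = 0 ↔ trans ω 0 e.1 = 0))}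

/-- `φ dP₀` is an invariant probability density for the kernel `κ`. -/
def IsInvDensity (P₀ : Measure (Config d)) (κ : Config d → Step d → ℝ)
    (φ : Config d → ℝ) : Prop :=
  Measurable φ ∧ (∀ ω, 0 ≤ φ ω) ∧ (∫ ω, φ ω ∂P₀) = 1 ∧
    (∀ᵐ ω ∂P₀, φ ω = ∑ e : Step d, κ (shift (-e.1) ω) e * φ (shift (-e.1) ω))

/-- The set `ℰ` of pairs `(π̃, φ)`. -/
def Epairs (d : ℕ) (P₀ : Measure (Config d)) :
    Set ((Config d → Step d → ℝ) × (Config d → ℝ)) :=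
  {q | q.1 ∈ PiT d P₀ ∧ IsInvDensity P₀ q.1 q.2}

/-- The measure `dμ(ω,e) = π̃(ω,e) φ(ω) dP₀(ω)` associated with a pair `(π̃, φ)`. -/
def pairMeasure (P₀ : Measure (Config d)) (κ : Config d → Step d → ℝ)
    (φ : Config d → ℝ) : Measure (EnvSp d) :=
  Measure.sum (fun e : Step d =>
    (P₀.withDensity (fun ω => ENNReal.ofReal (κ ω e * φ ω))).map (fun ω => (ω, e)))

/-- The kernel `dμ/d(μ)_1` associated with a measure on `Ω_0 × 𝕌_d`. -/
def toKappa (μ : Measure (EnvSp d)) : Config d → Step d → ℝ :=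
  fun ω e => ((slice μ e).rnDeriv (marg1 μ) ω).toReal

/-- The density `d(μ)_1/dP₀` associated with a measure on `Ω_0 × 𝕌_d`. -/
def toPhi (P₀ : Measure (Config d)) (μ : Measure (EnvSp d)) : Config d → ℝ :=
  fun ω => ((marg1 μ).rnDeriv P₀ ω).toReal

/-- The environment Markov transition operator `R_κ`. -/
def kernelStep (κ : Config d → Step d → ℝ) (f : Config d → ℝ) : Config d → ℝ :=
  fun ω => ∑ e : Step d, κ ω e * f (shift e.1 ω)

/-- `Q` is an invariant measure for the environment kernel `R_κ`. -/
def IsInvariant (κ : Config d → Step d → ℝ) (Q : Measure (Config d)) : Prop :=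
  ∀ f : Config d → ℝ, Measurable f → (∃ C, ∀ ω, |f ω| ≤ C) →
    ∫ ω, kernelStep κ f ω ∂Q = ∫ ω, f ω ∂Q

/-- Partial sum `Σ_{k<m} f(τ_{X_k}ω, X_{k+1}-X_k)` along a trajectory of length `N`. -/
def partialSumF (f : EnvSp d → ℝ) (ω : Config d) {N : ℕ} (s : Fin N → Step d) (m : ℕ) : ℝ :=
  ∑ k ∈ Finset.univ.filter (fun k : Fin N => (k : ℕ) < m), f (envPair ω s k)

/-- The sum of `G` along the path `γ` up to time `n`. -/
def pathSum (G : Config d → V d → ℝ) (ω : Config d) (γ : ℕ → V d) (n : ℕ) : ℝ :=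
  ∑ k ∈ Finset.range n, G (shift (γ k) ω) (γ (k + 1) - γ k)

/-- The class `𝒢_∞` of gradients: zero mean, uniformly bounded, closed loops. -/
def Ginfty (d : ℕ) (P₀ : Measure (Config d)) : Set (Config d → V d → ℝ) :=
  {G | (∀ e ∈ Ud d, Measurable (fun ω => G ω e)) ∧
    (∀ e ∈ Ud d, ∫ ω, G ω e ∂P₀ = 0) ∧
    (∃ M : ℝ, ∀ e ∈ Ud d, ∀ᵐ ω ∂P₀, |G ω e| ≤ M) ∧
    (∀ᵐ ω ∂P₀, ∀ (γ : ℕ → V d) (n : ℕ),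
      memCluster ω (γ 0) → IsOpenPath ω γ n → γ n = γ 0 → pathSum G ω γ n = 0)}

open Classical in
/-- The corrector `Ψ(ω,x)`: the sum of `G` along some open path from `0` to `x`. -/
def corr (G : Config d → V d → ℝ) (ω : Config d) (x : V d) : ℝ :=
  if h : ∃ q : (ℕ → V d) × ℕ, q.1 0 = 0 ∧ q.1 q.2 = x ∧ IsOpenPath ω q.1 q.2
  then pathSum G ω h.choose.1 h.choose.2 else 0

/-- The chemical distance: minimal length of an open path joining `x` and `y`. -/
def chemDist (ω : Config d) (x y : V d) : ℕ :=
  sInf {n : ℕ | ∃ γ : ℕ → V d, γ 0 = x ∧ γ n = y ∧ IsOpenPath ω γ n}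

open Classical in
/-- The functional `Λ(f,G)`. -/
def Lam (P₀ : Measure (Config d)) (f : EnvSp d → ℝ) (G : Config d → V d → ℝ) : EReal :=
  essSup (fun ω => ((Real.log (∑ e : Step d,
    if edgeOpen ω 0 e.1 then trans ω 0 e.1 * Real.exp (f (ω, e) + G ω e.1) else 0)) : EReal)) P₀

/-- The variational formula `H̄(f) = sup_{μ ∈ ℳ_1⋆} {⟨f,μ⟩ - ℑ(μ)}`. -/
def Hbar (P₀ : Measure (Config d)) (f : EnvSp d → ℝ) : EReal :=
  ⨆ μ ∈ M1star d P₀, ((pairing f μ : ℝ) : EReal) - ((entI P₀ μ : ℝ≥0∞) : EReal)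

/-- The finite σ-algebra `𝓑_k` recording all bonds in the box of size `k` around the origin. -/
def Bsig (d k : ℕ) : MeasurableSpace (Config d) :=
  MeasurableSpace.comap
    (fun (ω : Config d) (b : {b : EdgeIx d // ∀ i, |b.1 i| ≤ (k : ℤ)}) => ω b.1) inferInstance

end SRWPC

set_option linter.all false

namespace FinPerc
open Finset

section
variable {ι : Type*} [Fintype ι] [DecidableEq ι]

/-- The stopping-set property. -/
def Stopping (T : (ι → Bool) → Finset ι) : Prop :=
  ∀ ω η, (∀ b ∈ T ω, η b = ω b) → T η = T ω

open Classical in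
lemma sum_agree (S : Finset ι) (a : ι → Bool) (w : Bool → ℝ) (hw : w true + w false = 1) :
    ∑ η : ι → Bool, ∏ b, (if b ∈ S then (if η b = a b then (1:ℝ) else 0) else w (η b)) = 1 := by
  have h := Finset.prod_univ_sum (fun _ : ι => (Finset.univ : Finset Bool))
    (fun b v => (if b ∈ S then (if v = a b then (1:ℝ) else 0) else w v))
  rw [Fintype.piFinset_univ] at h
  rw [← h]
  apply Finset.prod_eq_one
  intro b _
  by_cases hb : b ∈ S
  · simp [hb]
  · simp [hb, hw]

open Classical in
lemma sum_stopping (T : (ι → Bool) → Finset ι) (hT : Stopping T) (w w' : Bool → ℝ)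
    (hw : w true + w false = 1) (hw' : w' true + w' false = 1) :
    ∑ ω : ι → Bool, ∏ b, (if b ∈ T ω then w' (ω b) else w (ω b)) = 1 := by
  have h1 : ∑ ω : ι → Bool, ∏ b, (if b ∈ T ω then w' (ω b) else w (ω b))
      = ∑ ω : ι → Bool, ∑ η : ι → Bool,
        (∏ b, (if b ∈ T ω then w' (ω b) else w (ω b))) *
        ∏ b, (if b ∈ T ω then (if η b = ω b then (1:ℝ) else 0) else w' (η b)) := by
    refine Finset.sum_congr rfl fun ω _ => ?_
    rw [← Finset.mul_sum, sum_agree _ _ _ hw', mul_one]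
  have h2 : ∑ η : ι → Bool, ∏ b, w' (η b)
      = ∑ η : ι → Bool, ∑ ω : ι → Bool, (∏ b, w' (η b)) *
        ∏ b, (if b ∈ T η then (if ω b = η b then (1:ℝ) else 0) else w (ω b)) := by
    refine Finset.sum_congr rfl fun ω _ => ?_
    rw [← Finset.mul_sum, sum_agree _ _ _ hw, mul_one]
  have h3 : ∑ η : ι → Bool, ∏ b, w' (η b) = 1 := by
    have := sum_agree (∅ : Finset ι) (fun _ => true) w' hw'
    simpa using this
  refine Eq.trans ?_ h3
  rw [h1, h2, Finset.sum_comm]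
  refine Finset.sum_congr rfl fun η _ => Finset.sum_congr rfl fun ω _ => ?_
  rw [← Finset.prod_mul_distrib, ← Finset.prod_mul_distrib]
  by_cases hA : ∀ b ∈ T ω, η b = ω b
  · have hTT := hT ω η hA
    refine Finset.prod_congr rfl fun b _ => ?_
    rw [hTT]
    by_cases hb : b ∈ T ω
    · simp [hb, hA b hb]
    · simp [hb, mul_comm]
  · have hB : ¬ ∀ b ∈ T η, ω b = η b := by
      intro hB
      have := hT η ω hB
      exact hA fun b hb => (hB b (this ▸ hb)).symm
    push Not at hA hB
    obtain ⟨b, hb, hne⟩ := hA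
    obtain ⟨c, hc, hne'⟩ := hB
    rw [Finset.prod_eq_zero (Finset.mem_univ b), Finset.prod_eq_zero (Finset.mem_univ c)]
    · simp [hc, hne']
    · simp [hb, hne]

/-- one-bond weights -/
def wt (p : ℝ) (v : Bool) : ℝ := if v then p else 1 - p
/-- centred closed indicator -/
def cv (p : ℝ) (v : Bool) : ℝ := if v then p - 1 else p
/-- weight of a configuration -/
def W (p : ℝ) (ω : ι → Bool) : ℝ := ∏ b, wt p (ω b)

lemma W_nonneg {p : ℝ} (h0 : 0 ≤ p) (h1 : p ≤ 1) (ω : ι → Bool) : 0 ≤ W p ω :=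
  Finset.prod_nonneg fun b _ => by unfold wt; split_ifs <;> linarith

lemma sum_W (p : ℝ) : ∑ ω : ι → Bool, W p ω = 1 := by
  classical
  have := sum_agree (∅ : Finset ι) (fun _ => true) (wt p) (by simp [wt])
  simpa [W] using this

lemma sum_L (p δ : ℝ) (T : (ι → Bool) → Finset ι) (hT : Stopping T) :
    ∑ ω : ι → Bool, W p ω * ∏ b ∈ T ω, (1 + δ * cv p (ω b)) = 1 := by
  refine Eq.trans ?_ (sum_stopping T hT (wt p) (fun v => wt p v * (1 + δ * cv p v))
    (by simp [wt]) (by simp [wt, cv]; ring))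
  refine Finset.sum_congr rfl fun ω _ => ?_
  have h := Finset.prod_ite_mem Finset.univ (T ω) (fun b => 1 + δ * cv p (ω b))
  rw [Finset.univ_inter] at h
  unfold W
  rw [← h, ← Finset.prod_mul_distrib]
  refine Finset.prod_congr rfl fun b _ => ?_
  split_ifs <;> simp

lemma exp_le_one_add {x : ℝ} (hx : |x| ≤ 1/2) : Real.exp (x - 2*x^2) ≤ 1 + x := by
  have h := abs_le.1 hx
  have hy := Real.add_one_le_exp (-(x - 2*x^2))
  have h1 : 0 < 1 - (x - 2*x^2) := by nlinarith [sq_nonneg x]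
  rw [Real.exp_neg] at hy
  have h2 : Real.exp (x - 2*x^2) ≤ (1 - (x - 2*x^2))⁻¹ := by
    rw [le_inv_comm₀ (Real.exp_pos _) h1]
    linarith
  refine h2.trans ?_
  rw [inv_le_iff_one_le_mul₀ h1]
  nlinarith [mul_nonneg (sq_nonneg x) (by linarith : 0 ≤ 1 + 2*x)]

lemma g_le {p : ℝ} (h0 : 0 ≤ p) (h1 : p ≤ 1) {ε : ℝ} (he : 0 < ε) (he2 : ε ≤ 1/2)
    (σ : ℝ) (hσ : |σ| = 1) (S : Finset ι) (ω : ι → Bool) :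
    σ * ∑ b ∈ S, cv p (ω b) ≤ 2 * ε * #S + (1/ε) * ∏ b ∈ S, (1 + (σ * ε) * cv p (ω b)) := by
  have hc : ∀ v, |cv p v| ≤ 1 := by
    intro v; unfold cv; rw [abs_le]; split_ifs <;> constructor <;> linarith
  have hL : Real.exp (∑ b ∈ S, ((σ * ε) * cv p (ω b) - 2*ε^2)) ≤
      ∏ b ∈ S, (1 + (σ * ε) * cv p (ω b)) := by
    rw [Real.exp_sum]
    refine Finset.prod_le_prod (fun _ _ => (Real.exp_pos _).le) fun b _ => ?_
    have hx : |σ * ε * cv p (ω b)| ≤ ε := by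
      rw [abs_mul, abs_mul, hσ, abs_of_pos he, one_mul]
      exact mul_le_of_le_one_right he.le (hc _)
    refine le_trans (Real.exp_le_exp.2 ?_) (exp_le_one_add (hx.trans he2))
    have : (σ * ε * cv p (ω b))^2 ≤ ε^2 := sq_le_sq' (abs_le.1 hx).1 (abs_le.1 hx).2
    linarith
  have h2 := Real.add_one_le_exp (∑ b ∈ S, ((σ * ε) * cv p (ω b) - 2*ε^2))
  rw [Finset.sum_sub_distrib, ← Finset.mul_sum, Finset.sum_const, nsmul_eq_mul] at h2
  have h3 : ε * (σ * ∑ b ∈ S, cv p (ω b)) ≤ ε * (2 * ε * #S + (1/ε) * ∏ b ∈ S, (1 + (σ * ε) * cv p (ω b))) := by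
    rw [mul_add, ← mul_assoc ε (1/ε), mul_one_div_cancel he.ne', one_mul]
    rw [Finset.sum_sub_distrib, ← Finset.mul_sum, Finset.sum_const, nsmul_eq_mul] at hL
    nlinarith
  exact le_of_mul_le_mul_left h3 he
end

section graph
variable {ι V : Type*} (s t : ι → V)

/-- adjacency through an open bond -/
def Adj (ω : ι → Bool) (x y : V) : Prop :=
  ∃ b, ω b = true ∧ ((s b = x ∧ t b = y) ∨ (s b = y ∧ t b = x))

/-- connection by open bonds -/
def Conn (ω : ι → Bool) (x y : V) : Prop := Relation.ReflTransGen (Adj s t ω) x y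

variable {s t}

lemma Adj.symm {ω : ι → Bool} {x y : V} (h : Adj s t ω x y) : Adj s t ω y x := by
  obtain ⟨b, hb, h⟩ := h
  exact ⟨b, hb, h.symm⟩

lemma Conn.symm {ω : ι → Bool} {x y : V} (h : Conn s t ω x y) : Conn s t ω y x := by
  unfold Conn at *
  induction h with
  | refl => exact Relation.ReflTransGen.refl
  | tail _ h2 ih => exact Relation.ReflTransGen.head h2.symm ih

lemma Conn.trans {ω : ι → Bool} {x y z : V} (h : Conn s t ω x y) (h' : Conn s t ω y z) :
    Conn s t ω x z := Relation.ReflTransGen.trans h h'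

lemma Conn.refl (ω : ι → Bool) (x : V) : Conn s t ω x x := Relation.ReflTransGen.refl

lemma Conn.edge {ω : ι → Bool} {b : ι} (h : ω b = true) : Conn s t ω (s b) (t b) :=
  Relation.ReflTransGen.single ⟨b, h, Or.inl ⟨rfl, rfl⟩⟩

lemma conn_insert [DecidableEq ι] {ω : ι → Bool} {b : ι} {u y : V}
    (h : Conn s t (Function.update ω b true) u y) :
    Conn s t ω u y ∨ Conn s t ω (s b) y ∨ Conn s t ω (t b) y := by
  unfold Conn at h
  induction h using Relation.ReflTransGen.head_induction_on with
  | refl => exact Or.inl (Conn.refl _ _)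
  | head h1 h2 ih =>
    rcases ih with ih | ih
    · obtain ⟨c, hc, hh⟩ := h1
      by_cases hcb : c = b
      · subst hcb
        rcases hh with ⟨_, rfl⟩ | ⟨rfl, _⟩
        · exact Or.inr (Or.inr ih)
        · exact Or.inr (Or.inl ih)
      · rw [Function.update_of_ne hcb] at hc
        exact Or.inl (Conn.trans (Relation.ReflTransGen.single ⟨c, hc, hh⟩) ih)
    · exact Or.inr ih

lemma Conn.mono {ω η : ι → Bool} (h : ∀ b, ω b = true → η b = true) {x y : V}
    (hc : Conn s t ω x y) : Conn s t η x y :=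
  by
  unfold Conn at hc
  induction hc with
  | refl => exact Conn.refl _ _
  | tail _ h2 ih =>
    obtain ⟨b, hb, hh⟩ := h2
    exact Conn.trans ih (Relation.ReflTransGen.single ⟨b, h b hb, hh⟩)

/-- If two configurations agree on bonds touching the cluster, the clusters coincide. -/
lemma conn_congr {ω η : ι → Bool} {x : V}
    (h : ∀ b, (Conn s t ω x (s b) ∨ Conn s t ω x (t b)) → η b = ω b) (y : V) :
    Conn s t η x y ↔ Conn s t ω x y := by
  constructor
  · intro hy
    unfold Conn at hy
    induction hy with
    | refl => exact Conn.refl _ _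
    | tail _ h2 ih =>
      obtain ⟨b, hb, hh⟩ := h2
      have : ω b = true := by
        rw [← h b, hb]
        rcases hh with ⟨rfl, _⟩ | ⟨_, rfl⟩
        · exact Or.inl ih
        · exact Or.inr ih
      exact Conn.trans ih (Relation.ReflTransGen.single ⟨b, this, hh⟩)
  · intro hy
    unfold Conn at hy
    induction hy with
    | refl => exact Conn.refl _ _
    | tail h1 h2 ih =>
      obtain ⟨b, hb, hh⟩ := h2
      have : η b = true := by
        rw [h b, hb]
        rcases hh with ⟨rfl, _⟩ | ⟨_, rfl⟩
        · exact Or.inl h1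
        · exact Or.inr h1
      exact Conn.trans ih (Relation.ReflTransGen.single ⟨b, this, hh⟩)

variable (s t)
/-- cluster -/
def cl (ω : ι → Bool) (x : V) : Set V := {y | Conn s t ω x y}

variable {s t} in
lemma cl_eq {ω : ι → Bool} {x y : V} (h : Conn s t ω x y) : cl s t ω x = cl s t ω y := by
  ext z; exact ⟨fun hz => h.symm.trans hz, fun hz => h.trans hz⟩

variable [Fintype ι] [DecidableEq ι]
open Classical in
/-- bonds touching a set of vertices -/
def touch (C : Set V) : Finset ι := univ.filter (fun b => s b ∈ C ∨ t b ∈ C)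

lemma mem_touch (C : Set V) (b : ι) : b ∈ touch s t C ↔ (s b ∈ C ∨ t b ∈ C) := by
  classical
  simp [touch]

/-- union of clusters meeting `B` -/
def UB (B : Finset V) (ω : ι → Bool) : Set V := {y | ∃ x ∈ B, Conn s t ω x y}

lemma stopping_cl (x : V) : Stopping (fun ω : ι → Bool => touch s t (cl s t ω x)) := by
  intro ω η h
  have : cl s t η x = cl s t ω x := by
    ext y
    exact conn_congr (fun b hb => h b ((mem_touch s t _ _).2 hb)) y
  simp only [this]

lemma stopping_UB (B : Finset V) : Stopping (fun ω : ι → Bool => touch s t (UB s t B ω)) := by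
  intro ω η h
  have : UB s t B η = UB s t B ω := by
    ext y
    refine exists_congr fun x => and_congr_right fun hx => ?_
    refine conn_congr (fun b hb => h b ?_) y
    refine (mem_touch s t _ _).2 ?_
    rcases hb with hb | hb
    · exact Or.inl ⟨x, hx, hb⟩
    · exact Or.inr ⟨x, hx, hb⟩
  simp only [this]

/-- bond `b` separates two distinct clusters meeting `B`. -/
def Bridge (B : Finset V) (ω : ι → Bool) (b : ι) : Prop :=
  (∃ x ∈ B, Conn s t ω (s b) x) ∧ (∃ x ∈ B, Conn s t ω (t b) x) ∧ ¬ Conn s t ω (s b) (t b)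

open Classical in
lemma bridge_le {p : ℝ} (h0 : 0 ≤ p) (h1 : p ≤ 1) (B : Finset V) (ω : ι → Bool) :
    p * #{b | Bridge s t B ω b} ≤ (∑ C ∈ B.image (cl s t ω), ∑ b ∈ touch s t C, cv p (ω b))
      - ∑ b ∈ touch s t (UB s t B ω), cv p (ω b) := by
  have e1 : ∀ C : Set V, ∑ b ∈ touch s t C, cv p (ω b)
      = ∑ b, if s b ∈ C ∨ t b ∈ C then cv p (ω b) else 0 := by
    intro C; rw [touch, Finset.sum_filter]
  simp only [e1]
  rw [Finset.sum_comm, ← Finset.sum_sub_distrib, Finset.card_filter, Nat.cast_sum, Finset.mul_sum]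
  refine Finset.sum_le_sum fun b _ => ?_
  rw [← Finset.sum_filter, Finset.sum_const, nsmul_eq_mul]
  set K := (B.image (cl s t ω)).filter (fun C => s b ∈ C ∨ t b ∈ C) with hK
  have hU : (s b ∈ UB s t B ω ∨ t b ∈ UB s t B ω) ↔ K.Nonempty := by
    simp only [hK, Finset.Nonempty, mem_filter, mem_image, UB]
    constructor
    · rintro (⟨x, hx, h⟩ | ⟨x, hx, h⟩)
      · exact ⟨_, ⟨x, hx, rfl⟩, Or.inl h⟩
      · exact ⟨_, ⟨x, hx, rfl⟩, Or.inr h⟩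
    · rintro ⟨_, ⟨x, hx, rfl⟩, h | h⟩
      · exact Or.inl ⟨x, hx, h⟩
      · exact Or.inr ⟨x, hx, h⟩
  simp only [hU]
  cases hb : ω b with
  | true =>
    have hc : Conn s t ω (s b) (t b) := Conn.edge hb
    have hnb : ¬ Bridge s t B ω b := fun h => h.2.2 hc
    have hK1 : #K ≤ 1 := by
      refine (Finset.card_le_card (t := {cl s t ω (s b)}) ?_).trans (by simp)
      intro C hC
      simp only [hK, mem_filter, mem_image] at hC
      obtain ⟨⟨x, hx, rfl⟩, h | h⟩ := hC
      · simpa using cl_eq h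
      · simpa using (cl_eq h).trans (cl_eq hc).symm
    rcases Finset.eq_empty_or_nonempty K with h | h
    · simp [h, hnb]
    · have : #K = 1 := le_antisymm hK1 h.card_pos
      simp [h, hnb, this]
  | false =>
    simp only [cv]
    rcases Finset.eq_empty_or_nonempty K with h | h
    · have hnb : ¬ Bridge s t B ω b := by
        rintro ⟨⟨x, hx, hh⟩, _⟩
        have : K.Nonempty := hU.1 (Or.inl ⟨x, hx, hh.symm⟩)
        simp [h] at this
      simp [h, hnb]
    · by_cases hbr : Bridge s t B ω b
      · have : 2 ≤ #K := by
          obtain ⟨⟨x, hx, hh⟩, ⟨y, hy, hh'⟩, hn⟩ := hbr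
          have h12 : 1 < #K := by
            rw [Finset.one_lt_card]
            refine ⟨cl s t ω x, ?_, cl s t ω y, ?_, ?_⟩
            · simp only [hK, mem_filter, mem_image]
              exact ⟨⟨x, hx, rfl⟩, Or.inl hh.symm⟩
            · simp only [hK, mem_filter, mem_image]
              exact ⟨⟨y, hy, rfl⟩, Or.inr hh'.symm⟩
            · intro heq
              have : t b ∈ cl s t ω x := heq ▸ hh'.symm
              exact hn (hh.trans this)
          exact h12
        have h2 : (2:ℝ) ≤ #K := by exact_mod_cast this
        simp [h, hbr]
        nlinarith
      · have h2 : (1:ℝ) ≤ #K := by exact_mod_cast h.card_pos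
        simp [h, hbr]
        nlinarith

open Classical in
theorem expected_bridge {p : ℝ} (h0 : 0 ≤ p) (h1 : p ≤ 1) {ε : ℝ} (he : 0 < ε) (he2 : ε ≤ 1/2)
    (B : Finset V) :
    p * ∑ ω : ι → Bool, W p ω * #{b | Bridge s t B ω b}
      ≤ 6 * ε * Fintype.card ι + (#B + 1) / ε := by
  have key : ∀ ω : ι → Bool, p * #{b | Bridge s t B ω b} ≤ 6 * ε * Fintype.card ι
      + (1/ε) * ((∑ x ∈ B, ∏ b ∈ touch s t (cl s t ω x), (1 + (1 * ε) * cv p (ω b)))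
        + ∏ b ∈ touch s t (UB s t B ω), (1 + (-1 * ε) * cv p (ω b))) := by
    intro ω
    refine (bridge_le s t h0 h1 B ω).trans ?_
    have a1 : ∀ C : Set V, ∑ b ∈ touch s t C, cv p (ω b) ≤ 2 * ε * #(touch s t C)
      + (1/ε) * ∏ b ∈ touch s t C, (1 + (1 * ε) * cv p (ω b)) := by
      intro C
      have := g_le h0 h1 he he2 1 (by simp) (touch s t C) ω
      simpa only [one_mul] using this
    have a2 := g_le h0 h1 he he2 (-1) (by simp) (touch s t (UB s t B ω)) ω
    have a3 : (#(touch s t (UB s t B ω)) : ℝ) ≤ Fintype.card ι := by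
      exact_mod_cast Finset.card_le_univ _
    have a4 : ∑ C ∈ B.image (cl s t ω), (#(touch s t C) : ℝ) ≤ 2 * Fintype.card ι := by
      have : ∑ C ∈ B.image (cl s t ω), #(touch s t C) ≤ 2 * Fintype.card ι := by
        simp only [touch, Finset.card_filter]
        rw [Finset.sum_comm, mul_comm, ← smul_eq_mul, ← Finset.card_univ, ← Finset.sum_const]
        refine Finset.sum_le_sum fun b _ => ?_
        rw [← Finset.card_filter]
        refine (Finset.card_le_card (t := {cl s t ω (s b), cl s t ω (t b)}) ?_).trans
          Finset.card_le_two
        intro C hC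
        simp only [mem_filter, mem_image] at hC
        obtain ⟨⟨x, hx, rfl⟩, h | h⟩ := hC
        · simp [cl_eq h]
        · simp [cl_eq h]
      exact_mod_cast this
    have a5 : ∀ C : Set V, 0 ≤ ∏ b ∈ touch s t C, (1 + (1 * ε) * cv p (ω b)) := by
      intro C
      refine Finset.prod_nonneg fun b _ => ?_
      unfold cv; split_ifs <;> nlinarith
    have a6 : ∑ C ∈ B.image (cl s t ω), ∏ b ∈ touch s t C, (1 + (1 * ε) * cv p (ω b))
        ≤ ∑ x ∈ B, ∏ b ∈ touch s t (cl s t ω x), (1 + (1 * ε) * cv p (ω b)) := by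
      refine Finset.sum_image_le_of_nonneg ?_
      intro x _
      exact a5 _
    have a7 := Finset.sum_le_sum (s := B.image (cl s t ω)) fun C _ => a1 C
    rw [Finset.sum_add_distrib, ← Finset.mul_sum, ← Finset.mul_sum] at a7
    have a8 := mul_le_mul_of_nonneg_left a6 (one_div_pos.2 he).le
    have a9 := mul_le_mul_of_nonneg_left a4 (by positivity : 0 ≤ 2 * ε)
    have a10 := mul_le_mul_of_nonneg_left a3 (by positivity : 0 ≤ 2 * ε)
    rw [mul_add]
    linarith
  have h2 : p * ∑ ω : ι → Bool, W p ω * #{b | Bridge s t B ω b}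
      ≤ ∑ ω : ι → Bool, W p ω * (6 * ε * Fintype.card ι
      + (1/ε) * ((∑ x ∈ B, ∏ b ∈ touch s t (cl s t ω x), (1 + (1 * ε) * cv p (ω b)))
        + ∏ b ∈ touch s t (UB s t B ω), (1 + (-1 * ε) * cv p (ω b)))) := by
    rw [Finset.mul_sum]
    refine Finset.sum_le_sum fun ω _ => ?_
    rw [mul_left_comm]
    exact mul_le_mul_of_nonneg_left (key ω) (W_nonneg h0 h1 ω)
  refine h2.trans (le_of_eq ?_)
  simp only [mul_add, Finset.sum_add_distrib, mul_left_comm (W p _) (1/ε), ← Finset.mul_sum]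
  rw [← Finset.sum_mul, sum_W, sum_L p (-1 * ε) _ (stopping_UB s t B)]
  have : ∑ ω : ι → Bool, W p ω * ∑ x ∈ B, ∏ b ∈ touch s t (cl s t ω x), (1 + (1 * ε) * cv p (ω b))
      = #B := by
    simp only [Finset.mul_sum]
    rw [Finset.sum_comm]
    simp only [sum_L p (1 * ε) _ (stopping_cl s t _)]
    simp
  rw [this]
  ring
end graph
end FinPerc

namespace SRWPC
open FinPerc

section meas
variable {d : ℕ}

/-- cylinder event -/
def cyl (F : Finset (EdgeIx d)) (a : EdgeIx d → Bool) : Set (Config d) := {ω | ∀ b ∈ F, ω b = a b}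

lemma mem_cyl (F : Finset (EdgeIx d)) (a : EdgeIx d → Bool) (ω : Config d) :
    ω ∈ cyl F a ↔ ∀ b ∈ F, ω b = a b := Iff.rfl

lemma measurableSet_cyl (F : Finset (EdgeIx d)) (a : EdgeIx d → Bool) : MeasurableSet (cyl F a) := by
  have : cyl F a = ⋂ b ∈ F, (fun ω : Config d => ω b) ⁻¹' {a b} := by
    ext ω; simp [mem_cyl]
  rw [this]
  exact Finset.measurableSet_biInter _ fun b _ => measurable_pi_apply b (measurableSet_singleton _)

lemma ext_cyl {μ ν : Measure (Config d)} [IsFiniteMeasure μ]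
    (h : ∀ F a, μ (cyl F a) = ν (cyl F a)) : μ = ν := by
  refine ext_of_generate_finite {s | ∃ F a, s = cyl F a} ?_ ?_ ?_ ?_
  · apply le_antisymm
    · rw [MeasurableSpace.pi]
      refine iSup_le fun b => ?_
      rw [← measurable_iff_comap_le]
      refine @measurable_to_countable' _ _ _ _ (MeasurableSpace.generateFrom _) _ fun v => ?_
      refine MeasurableSpace.measurableSet_generateFrom ⟨{b}, fun _ => v, ?_⟩
      ext ω; simp [mem_cyl]
    · refine MeasurableSpace.generateFrom_le ?_
      rintro _ ⟨F, a, rfl⟩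
      exact measurableSet_cyl F a
  · rintro _ ⟨F, a, rfl⟩ _ ⟨G, c, rfl⟩ ⟨ω, h1, h2⟩
    refine ⟨F ∪ G, ω, ?_⟩
    ext η
    simp only [Set.mem_inter_iff, mem_cyl, Finset.mem_union] at *
    constructor
    · rintro ⟨ha, hb⟩ b (hF | hG)
      · rw [ha b hF, h1 b hF]
      · rw [hb b hG, h2 b hG]
    · intro hh
      exact ⟨fun b hb => (hh b (Or.inl hb)).trans (h1 b hb),
        fun b hb => (hh b (Or.inr hb)).trans (h2 b hb)⟩
  · rintro _ ⟨F, a, rfl⟩; exact h F a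
  · have := h ∅ (fun _ => true)
    simpa [cyl] using this

lemma measurable_shift (x : V d) : Measurable (shift x : Config d → Config d) :=
  measurable_pi_lambda _ fun b => measurable_pi_apply _

variable {p : ℝ} {P : Measure (Config d)}

lemma P_cyl (hP : IsBernoulli d p P) (F : Finset (EdgeIx d)) (a : EdgeIx d → Bool) :
    P (cyl F a) = ∏ b ∈ F, ENNReal.ofReal (if a b then p else 1 - p) := hP.2 F a

lemma shift_mp (hP : IsBernoulli d p P) (x : V d) : MeasurePreserving (shift x) P P := by
  haveI := hP.1
  refine ⟨measurable_shift x, ?_⟩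
  haveI : IsFiniteMeasure (P.map (shift x)) := by infer_instance
  refine ext_cyl fun F a => ?_
  rw [Measure.map_apply (measurable_shift x) (measurableSet_cyl F a)]
  have hinj : Function.Injective (fun b : EdgeIx d => ((b.1 + x, b.2) : EdgeIx d)) := by
    intro b c h
    simpa [Prod.ext_iff] using h
  have : shift x ⁻¹' cyl F a = cyl (F.image (fun b => (b.1 + x, b.2)))
      (fun b => a (b.1 - x, b.2)) := by
    ext ω
    simp only [Set.mem_preimage, mem_cyl, shift, Finset.forall_mem_image, add_sub_cancel_right]
  rw [this, P_cyl hP, P_cyl hP, Finset.prod_image hinj.injOn]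
  simp

lemma insert_null (hP : IsBernoulli d p P) (hp : 0 < p) (b : EdgeIx d) {S : Set (Config d)}
    (hS : P S = 0) : P {ω | Function.update ω b true ∈ S} = 0 := by
  haveI := hP.1
  have hm : Measurable (fun ω : Config d => Function.update ω b true) := by
    refine measurable_pi_lambda _ fun c => ?_
    by_cases h : c = b
    · subst h; simp
    · simp only [Function.update_of_ne h]; exact measurable_pi_apply c
  have key : ENNReal.ofReal p • P.map (fun ω : Config d => Function.update ω b true)
      = P.restrict {ω | ω b = true} := by
    have hb : {ω : Config d | ω b = true} = cyl {b} (fun _ => true) := by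
      ext ω; simp [mem_cyl]
    haveI : IsFiniteMeasure (ENNReal.ofReal p • P.map (fun ω : Config d => Function.update ω b true)) :=
      Measure.smul_finite _ ENNReal.ofReal_ne_top
    refine ext_cyl fun F a => ?_
    rw [Measure.smul_apply, Measure.map_apply hm (measurableSet_cyl F a),
      Measure.restrict_apply (measurableSet_cyl F a)]
    by_cases hF : b ∈ F
    · by_cases ha : a b = true
      · have e1 : (fun ω : Config d => Function.update ω b true) ⁻¹' cyl F a = cyl (F.erase b) a := by
          ext ω
          simp only [Set.mem_preimage, mem_cyl, Finset.mem_erase]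
          constructor
          · rintro h c ⟨hc, hcF⟩
            have := h c hcF
            rwa [Function.update_of_ne hc] at this
          · intro h c hc
            by_cases hcb : c = b
            · subst hcb; simp [ha]
            · rw [Function.update_of_ne hcb]; exact h c ⟨hcb, hc⟩
        have e2 : cyl F a ∩ {ω : Config d | ω b = true} = cyl F a := by
          ext ω
          simp only [Set.mem_inter_iff, mem_cyl]
          exact ⟨fun h => h.1, fun h => ⟨h, (h b hF).trans ha⟩⟩
        rw [e1, e2, P_cyl hP, P_cyl hP, ← Finset.mul_prod_erase F _ hF]
        simp [ha]
      · have e1 : (fun ω : Config d => Function.update ω b true) ⁻¹' cyl F a = ∅ := by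
          ext ω
          simp only [Set.mem_preimage, mem_cyl, Set.mem_empty_iff_false, iff_false]
          intro h
          have := h b hF
          simp at this
          exact ha this
        have e2 : cyl F a ∩ {ω : Config d | ω b = true} = ∅ := by
          ext ω
          simp only [Set.mem_inter_iff, mem_cyl, Set.mem_empty_iff_false, iff_false]
          rintro ⟨h, h2⟩
          exact ha ((h b hF).symm.trans h2)
        rw [e1, e2]; simp
    · have e1 : (fun ω : Config d => Function.update ω b true) ⁻¹' cyl F a = cyl F a := by
        ext ω
        simp only [Set.mem_preimage, mem_cyl]
        refine forall₂_congr fun c hc => ?_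
        rw [Function.update_of_ne (fun h : c = b => hF (h ▸ hc))]
      have e2 : cyl F a ∩ {ω : Config d | ω b = true} = cyl (insert b F) (Function.update a b true) := by
        ext ω
        simp only [Set.mem_inter_iff, mem_cyl, Finset.mem_insert, forall_eq_or_imp,
          Function.update_self]
        rw [and_comm]
        refine and_congr Iff.rfl (forall₂_congr fun c hc => ?_)
        rw [Function.update_of_ne (fun h : c = b => hF (h ▸ hc))]
      rw [e1, e2, P_cyl hP, P_cyl hP, Finset.prod_insert hF]
      simp only [Function.update_self, if_true, smul_eq_mul]
      congr 1
      refine Finset.prod_congr rfl fun c hc => ?_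
      rw [Function.update_of_ne (fun h : c = b => hF (h ▸ hc))]
  have h1 : (P.map (fun ω : Config d => Function.update ω b true)) S = 0 := by
    have h2 : (P.restrict {ω : Config d | ω b = true}) S = 0 :=
      Measure.absolutelyContinuous_of_le Measure.restrict_le_self hS
    rw [← key, Measure.smul_apply, smul_eq_mul] at h2
    rcases mul_eq_zero.1 h2 with h | h
    · simp at h; linarith
    · exact h
  exact le_antisymm ((Measure.le_map_apply hm.aemeasurable S).trans h1.le) bot_le

lemma coord_indep (hP : IsBernoulli d p P) (hp0 : 0 ≤ p) (hp1 : p ≤ 1) :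
    iIndepFun (fun (b : EdgeIx d) (ω : Config d) => ω b) P := by
  haveI := hP.1
  set ν : Measure Bool := ENNReal.ofReal p • Measure.dirac true
    + ENNReal.ofReal (1 - p) • Measure.dirac false with hν
  have hν1 : ∀ v, ν {v} = ENNReal.ofReal (if v then p else 1 - p) := by
    intro v; cases v <;> simp [hν]
  haveI : IsProbabilityMeasure ν := by
    constructor
    simp [hν]
    rw [← ENNReal.ofReal_add hp0 (by linarith)]
    simp
  have hPν : P = Measure.infinitePi (fun _ : EdgeIx d => ν) := by
    refine ext_cyl fun F a => ?_
    have : cyl F a = Set.pi (F : Set (EdgeIx d)) (fun b => {a b}) := by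
      ext ω; simp [mem_cyl, Set.mem_pi]
    rw [P_cyl hP, this, Measure.infinitePi_pi _ (fun _ _ => measurableSet_singleton _)]
    simp [hν1]
  rw [hPν]
  exact iIndepFun_infinitePi (X := fun _ v => v) (fun _ => measurable_id)

lemma zero_one (hd : 0 < d) (hP : IsBernoulli d p P) (hp0 : 0 ≤ p) (hp1 : p ≤ 1)
    {B : Set (Config d)} (hB : MeasurableSet B) (hinv : ∀ x, shift x ⁻¹' B = B) (hpos : P B ≠ 0) :
    P.real B = 1 := by
  haveI := hP.1
  haveI : Nonempty (Fin d) := ⟨⟨0, hd⟩⟩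
  have hdense : P.MeasureDense (measurableCylinders (fun _ : EdgeIx d => Bool)) :=
    Measure.MeasureDense.of_generateFrom_isSetAlgebra_finite P isSetAlgebra_measurableCylinders
      generateFrom_measurableCylinders.symm
  have key : ∀ ε : ℝ, 0 < ε → P.real B - P.real B ^ 2 ≤ 4 * ε := by
    intro ε hε
    obtain ⟨D, hD, hBD⟩ := hdense.approx B hB (measure_ne_top _ _) ε hε
    have hDm : MeasurableSet D := hdense.measurable D hD
    obtain ⟨F, S, hS, rfl⟩ := (mem_measurableCylinders _).1 hD
    set D : Set (Config d) := cylinder (α := fun _ : EdgeIx d => Bool) F S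
    obtain ⟨x, hx⟩ := Infinite.exists_notMem_finset
      ((F ×ˢ F).image (fun q : EdgeIx d × EdgeIx d => q.2.1 - q.1.1))
    have hx' : ∀ b ∈ F, (b.1 + x, b.2) ∉ F := by
      intro b hb hb'
      apply hx
      rw [Finset.mem_image]
      exact ⟨(b, (b.1 + x, b.2)), Finset.mem_product.2 ⟨hb, hb'⟩, by simp⟩
    have hxD : P.real (D ∩ shift x ⁻¹' D) = P.real D * P.real D := by
      set F' : Finset (EdgeIx d) := F.image (fun b => (b.1 + x, b.2)) with hF'
      have hdisj : Disjoint F F' := by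
        rw [Finset.disjoint_left]
        intro b hb hb'
        obtain ⟨c, hc, rfl⟩ := Finset.mem_image.1 hb'
        exact hx' c hc hb
      have hind := (coord_indep hP hp0 hp1).indepFun_finset F F' hdisj (fun b => measurable_pi_apply b)
      let φ : (F' → Bool) → (F → Bool) := fun a b =>
        a ⟨(b.1.1 + x, b.1.2), Finset.mem_image.2 ⟨b.1, b.2, rfl⟩⟩
      have hφ : Measurable φ := measurable_pi_lambda _ fun b => measurable_pi_apply _
      have h := hind.measure_inter_preimage_eq_mul S (φ ⁻¹' S) hS (hφ hS)
      have e1 : (fun (ω : Config d) (b : F) => ω b) ⁻¹' S = D := rfl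
      have e2 : (fun (ω : Config d) (b : F') => ω b) ⁻¹' (φ ⁻¹' S) = shift x ⁻¹' D := rfl
      rw [e1, e2, (shift_mp hP x).measure_preimage hDm.nullMeasurableSet] at h
      rw [measureReal_def, h, ENNReal.toReal_mul, measureReal_def]
    have hsy : P.real (symmDiff B D) ≤ ε := by
      rw [measureReal_def]
      exact ENNReal.toReal_le_of_le_ofReal hε.le hBD.le
    have a1 : P.real B ≤ P.real D + ε := by
      have : B ⊆ D ∪ symmDiff B D := by
        intro ω h
        by_cases h' : ω ∈ D
        · exact Or.inl h'
        · exact Or.inr (Or.inl ⟨h, h'⟩)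
      linarith [(measureReal_mono this (μ := P)).trans (measureReal_union_le _ _)]
    have a2 : P.real D ≤ P.real B + ε := by
      have : D ⊆ B ∪ symmDiff B D := by
        intro ω h
        by_cases h' : ω ∈ B
        · exact Or.inl h'
        · exact Or.inr (Or.inr ⟨h, h'⟩)
      linarith [(measureReal_mono this (μ := P)).trans (measureReal_union_le _ _)]
    have a3 : P.real B ≤ P.real (D ∩ shift x ⁻¹' D) + 2 * ε := by
      have hsub : B ⊆ (D ∩ shift x ⁻¹' D) ∪ (symmDiff B D ∪ shift x ⁻¹' (symmDiff B D)) := by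
        intro ω h
        have h2 : shift x ω ∈ B := by
          have : ω ∈ shift x ⁻¹' B := by rw [hinv]; exact h
          exact this
        by_cases h' : ω ∈ D
        · by_cases h'' : shift x ω ∈ D
          · exact Or.inl ⟨h', h''⟩
          · exact Or.inr (Or.inr (Or.inl ⟨h2, h''⟩))
        · exact Or.inr (Or.inl (Or.inl ⟨h, h'⟩))
      have h3 := (measureReal_mono hsub (μ := P)).trans (measureReal_union_le _ _)
      have h4 := measureReal_union_le (μ := P) (symmDiff B D) (shift x ⁻¹' (symmDiff B D))
      have h5 : P.real (shift x ⁻¹' (symmDiff B D)) = P.real (symmDiff B D) := by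
        rw [measureReal_def, (shift_mp hP x).measure_preimage (hB.symmDiff hDm).nullMeasurableSet,
          measureReal_def]
      linarith
    have b1 : P.real B ≤ 1 := measureReal_le_one
    have b2 : P.real D ≤ 1 := measureReal_le_one
    have b3 : 0 ≤ P.real B := measureReal_nonneg
    have b4 : 0 ≤ P.real D := measureReal_nonneg
    nlinarith
  have h0 : P.real B - P.real B ^ 2 ≤ 0 := by
    refine le_of_forall_pos_le_add fun ε hε => ?_
    have := key (ε / 4) (by positivity)
    linarith
  have b1 : P.real B ≤ 1 := measureReal_le_one
  have b3 : 0 < P.real B := by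
    rw [measureReal_def]
    exact ENNReal.toReal_pos hpos (measure_ne_top _ _)
  nlinarith
end meas
end SRWPC

namespace SRWPC
open FinPerc

section lattice
variable {d : ℕ}

/-- first endpoint -/
def src (b : EdgeIx d) : V d := b.1
/-- second endpoint -/
def tgt (b : EdgeIx d) : V d := b.1 + unitVec d b.2

/-- connection in the full lattice -/
abbrev Co (ω : Config d) (x y : V d) : Prop := FinPerc.Conn src tgt ω x y

/-- `x` is in an infinite cluster -/
def Inf (ω : Config d) (x : V d) : Prop := Set.Infinite {y | Co ω x y}

lemma Inf.congr {ω : Config d} {x y : V d} (h : Co ω x y) (hx : Inf ω x) : Inf ω y :=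
  Set.Infinite.mono (fun _ hz => h.symm.trans hz) hx

lemma Inf.mono {ω η : Config d} (h : ∀ b, ω b = true → η b = true) {x : V d} (hx : Inf ω x) :
    Inf η x :=
  Set.Infinite.mono (fun _ hz => Conn.mono h hz) hx

lemma adj_shift {ω : Config d} {z x y : V d} (h : Adj src tgt (shift z ω) x y) :
    Adj src tgt ω (x + z) (y + z) := by
  obtain ⟨b, hb, h⟩ := h
  refine ⟨(b.1 + z, b.2), hb, ?_⟩
  simp only [src, tgt] at *
  rcases h with ⟨rfl, rfl⟩ | ⟨rfl, rfl⟩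
  · exact Or.inl ⟨rfl, by abel⟩
  · exact Or.inr ⟨rfl, by abel⟩

lemma co_shift' {ω : Config d} {z x y : V d} (h : Co (shift z ω) x y) :
    Co ω (x + z) (y + z) := by
  unfold Co Conn at h
  induction h with
  | refl => exact Conn.refl _ _
  | tail _ h2 ih => exact Conn.trans ih (Relation.ReflTransGen.single (adj_shift h2))

lemma shift_shift (x y : V d) (ω : Config d) : shift x (shift y ω) = shift (x + y) ω := by
  funext b; simp only [shift, add_assoc]

lemma shift_zero (ω : Config d) : shift 0 ω = ω := by
  funext b; simp [shift]

lemma co_shift {ω : Config d} {z x y : V d} : Co (shift z ω) x y ↔ Co ω (x + z) (y + z) := by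
  refine ⟨co_shift', fun h => ?_⟩
  have h2 : Co (shift (-z) (shift z ω)) (x + z) (y + z) := by
    rw [shift_shift, neg_add_cancel, shift_zero]; exact h
  simpa using co_shift' h2

lemma inf_shift {ω : Config d} {z x : V d} : Inf (shift z ω) x ↔ Inf ω (x + z) := by
  unfold Inf
  have : {y | Co ω (x + z) y} = (fun y => y + z) '' {y | Co (shift z ω) x y} := by
    ext y
    constructor
    · intro h
      refine ⟨y - z, ?_, by simp⟩
      show Co (shift z ω) x (y - z)
      rw [co_shift, sub_add_cancel]; exact h
    · rintro ⟨y, hy, rfl⟩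
      exact co_shift.1 hy
  rw [this, Set.infinite_image_iff (add_left_injective z).injOn]

/-! measurability -/

lemma measurableSet_adj (x y : V d) : MeasurableSet {ω : Config d | Adj src tgt ω x y} := by
  have : {ω : Config d | Adj src tgt ω x y} = ⋃ b : EdgeIx d,
      {ω : Config d | ω b = true} ∩ {_ω | (src b = x ∧ tgt b = y) ∨ (src b = y ∧ tgt b = x)} := by
    ext ω; simp only [Set.mem_iUnion]; rfl
  rw [this]
  refine MeasurableSet.iUnion fun b => MeasurableSet.inter ?_ (MeasurableSet.const _)
  have hb : Measurable (fun ω : Config d => ω b) := measurable_pi_apply b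
  exact hb (measurableSet_singleton true)

/-- connection in `n` steps -/
def CoN (ω : Config d) (x : V d) : ℕ → V d → Prop
  | 0, y => x = y
  | n + 1, y => ∃ z, CoN ω x n z ∧ Adj src tgt ω z y

lemma co_iff (ω : Config d) (x y : V d) : Co ω x y ↔ ∃ n, CoN ω x n y := by
  constructor
  · intro h
    unfold Co Conn at h
    induction h with
    | refl => exact ⟨0, rfl⟩
    | tail _ h2 ih => obtain ⟨n, hn⟩ := ih; exact ⟨n + 1, _, hn, h2⟩
  · rintro ⟨n, hn⟩
    induction n generalizing y with
    | zero => cases hn; exact Conn.refl _ _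
    | succ n ih => obtain ⟨z, hz, h⟩ := hn; exact (ih z hz).trans (Relation.ReflTransGen.single h)

lemma measurableSet_co (x y : V d) : MeasurableSet {ω : Config d | Co ω x y} := by
  have h1 : ∀ n y, MeasurableSet {ω : Config d | CoN ω x n y} := by
    intro n
    induction n with
    | zero => intro y; exact MeasurableSet.const _
    | succ n ih =>
      intro y
      have : {ω : Config d | CoN ω x (n+1) y} = ⋃ z, {ω | CoN ω x n z} ∩ {ω | Adj src tgt ω z y} := by
        ext ω; simp only [Set.mem_iUnion]; rfl
      rw [this]
      exact MeasurableSet.iUnion fun z => (ih z).inter (measurableSet_adj z y)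
  have : {ω : Config d | Co ω x y} = ⋃ n, {ω | CoN ω x n y} := by
    ext ω
    simp only [Set.mem_iUnion]
    exact co_iff ω x y
  rw [this]
  exact MeasurableSet.iUnion fun n => h1 n y

lemma inf_iff (ω : Config d) (x : V d) : Inf ω x ↔ ∀ F : Finset (V d), ∃ y, y ∉ F ∧ Co ω x y := by
  constructor
  · intro h F
    obtain ⟨y, hy, hF⟩ := h.exists_notMem_finset F
    exact ⟨y, hF, hy⟩
  · intro h hfin
    obtain ⟨y, hy, hc⟩ := h hfin.toFinset
    exact hy (hfin.mem_toFinset.2 hc)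

lemma measurableSet_inf (x : V d) : MeasurableSet {ω : Config d | Inf ω x} := by
  have : {ω : Config d | Inf ω x} = ⋂ F : Finset (V d), ⋃ y : V d, {_ω | y ∉ F} ∩ {ω | Co ω x y} := by
    ext ω
    simp only [Set.mem_iInter, Set.mem_iUnion]
    exact inf_iff ω x
  rw [this]
  exact MeasurableSet.iInter fun F => MeasurableSet.iUnion fun y =>
    (MeasurableSet.const _).inter (measurableSet_co x y)

/-- two distinct infinite clusters at `x`, `y` -/
def Dis (x y : V d) : Set (Config d) := {ω | Inf ω x ∧ Inf ω y ∧ ¬ Co ω x y}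

lemma measurableSet_dis (x y : V d) : MeasurableSet (Dis x y) :=
  (measurableSet_inf x).inter ((measurableSet_inf y).inter (measurableSet_co x y).compl)

lemma dis_shift (x y z : V d) : shift z ⁻¹' (Dis x y) = Dis (x + z) (y + z) := by
  ext ω
  show (Inf _ _ ∧ Inf _ _ ∧ ¬ Co _ _ _) ↔ (Inf _ _ ∧ Inf _ _ ∧ ¬ Co _ _ _)
  rw [inf_shift, inf_shift, co_shift]

/-! boxes -/

/-- box of radius `n` -/
def box (d n : ℕ) : Finset (V d) := Finset.Icc (fun _ => -(n:ℤ)) (fun _ => (n:ℤ))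

lemma mem_box {n : ℕ} {x : V d} : x ∈ box d n ↔ ∀ i, -(n:ℤ) ≤ x i ∧ x i ≤ n := by
  simp only [box, Finset.mem_Icc, Pi.le_def]
  exact ⟨fun h i => ⟨h.1 i, h.2 i⟩, fun h => ⟨fun i => (h i).1, fun i => (h i).2⟩⟩

lemma card_box (n : ℕ) : (box d n).card = (2 * n + 1) ^ d := by
  rw [box, Pi.card_Icc]
  simp only [Int.card_Icc, Finset.prod_const, Finset.card_univ, Fintype.card_fin]
  congr 1
  omega

lemma unitVec_cases (i j : Fin d) : unitVec d i j = 0 ∨ unitVec d i j = 1 := by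
  unfold unitVec; split_ifs <;> simp

/-- bonds of the finite box -/
def Eb (d n : ℕ) : Finset (EdgeIx d) := box d (n+1) ×ˢ Finset.univ

/-- boundary layer -/
def Bb (d n : ℕ) : Finset (V d) := box d (n+2) \ box d n

/-- restriction of the configuration -/
def res (n : ℕ) (ω : Config d) : Eb d n → Bool := fun b => ω b

/-- endpoints -/
def srcE (n : ℕ) (b : Eb d n) : V d := src b.1
/-- endpoints -/
def tgtE (n : ℕ) (b : Eb d n) : V d := tgt b.1

lemma conn_of_res {n : ℕ} {ω : Config d} {x y : V d} (h : Conn (srcE n) (tgtE n) (res n ω) x y) :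
    Co ω x y := by
  unfold Conn at h
  induction h with
  | refl => exact Conn.refl _ _
  | tail _ h2 ih =>
    obtain ⟨b, hb, hh⟩ := h2
    exact Conn.trans ih (Relation.ReflTransGen.single ⟨b.1, hb, hh⟩)

lemma src_mem_of {n : ℕ} {c : EdgeIx d} (h : src c ∈ box d n ∨ tgt c ∈ box d n) :
    src c ∈ box d (n+1) ∧ tgt c ∈ box d (n+1) := by
  simp only [mem_box, src, tgt, Pi.add_apply] at *
  push_cast
  rcases h with h | h
  · exact ⟨fun i => by have := h i; omega,
      fun i => by have := h i; rcases unitVec_cases c.2 i with h | h <;> rw [h] <;> omega⟩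
  · refine ⟨fun i => ?_, fun i => ?_⟩ <;>
    · have h1 := h i
      rcases unitVec_cases c.2 i with h2 | h2 <;> omega

lemma box_mono {n m : ℕ} (h : n ≤ m) {x : V d} (hx : x ∈ box d n) : x ∈ box d m := by
  rw [mem_box] at *
  intro i
  have := hx i
  omega

lemma escape {n : ℕ} {ω : Config d} {x : V d} (hx : x ∈ box d (n+2)) (hinf : Inf ω x) :
    ∃ v ∈ Bb d n, Conn (srcE n) (tgtE n) (res n ω) x v := by
  by_contra hcon
  push Not at hcon
  have key : ∀ v, Co ω x v → v ∈ box d (n+2) ∧ Conn (srcE n) (tgtE n) (res n ω) x v := by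
    intro v hv
    unfold Co Conn at hv
    induction hv with
    | refl => exact ⟨hx, Conn.refl _ _⟩
    | @tail u v _ h2 ih =>
      obtain ⟨hu, huc⟩ := ih
      have hub : u ∈ box d n := by
        by_contra hnb
        exact hcon u (Finset.mem_sdiff.2 ⟨hu, hnb⟩) huc
      obtain ⟨c, hc, hh⟩ := h2
      have hs : src c ∈ box d (n+1) ∧ tgt c ∈ box d (n+1) := by
        apply src_mem_of
        rcases hh with ⟨rfl, _⟩ | ⟨_, rfl⟩
        · exact Or.inl hub
        · exact Or.inr hub
      have hcE : c ∈ Eb d n := Finset.mem_product.2 ⟨hs.1, Finset.mem_univ _⟩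
      refine ⟨?_, Conn.trans huc (Relation.ReflTransGen.single ⟨⟨c, hcE⟩, hc, hh⟩)⟩
      rcases hh with ⟨_, rfl⟩ | ⟨rfl, _⟩
      · exact box_mono (by omega) hs.2
      · exact box_mono (by omega) hs.1
  exact hinf ((box d (n+2)).finite_toSet.subset fun v hv => (key v hv).1)

variable {p : ℝ} {P : Measure (Config d)}

lemma res_prob (hP : IsBernoulli d p P) (hp0 : 0 ≤ p) (hp1 : p ≤ 1) (n : ℕ) (a : Eb d n → Bool) :
    P.real (res n ⁻¹' {a}) = W p a := by
  classical
  let a' : EdgeIx d → Bool := fun b => if h : b ∈ Eb d n then a ⟨b, h⟩ else false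
  have : res n ⁻¹' {a} = cyl (Eb d n) a' := by
    ext ω
    simp only [Set.mem_preimage, Set.mem_singleton_iff, mem_cyl]
    constructor
    · intro h b hb
      simp only [a', hb, dif_pos, ← h]; rfl
    · intro h
      funext b
      have := h b.1 b.2
      simp only [a', b.2, dif_pos] at this
      exact this
  rw [this, measureReal_def, P_cyl hP, ENNReal.toReal_prod, W, ← Finset.prod_coe_sort]
  refine Finset.prod_congr rfl fun b _ => ?_
  have hb : a' b = a b := by simp [a']
  rw [hb, ENNReal.toReal_ofReal (by split_ifs <;> linarith)]
  rfl

lemma measurable_res (n : ℕ) : Measurable (res n : Config d → _) :=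
  measurable_pi_lambda _ fun b => measurable_pi_apply _

lemma finite_bound (hP : IsBernoulli d p P) (hp0 : 0 ≤ p) (hp1 : p ≤ 1) (i : Fin d) (n : ℕ)
    {ε : ℝ} (he : 0 < ε) (he2 : ε ≤ 1/2) :
    p * ((2 * n + 3 : ℝ) ^ d * P.real (Dis 0 (unitVec d i)))
      ≤ 6 * ε * (d * (2 * n + 3 : ℝ) ^ d) + (((2 * n + 5 : ℝ) ^ d - (2 * n + 1) ^ d) + 1) / ε := by
  classical
  haveI := hP.1
  have hE : (Fintype.card (Eb d n) : ℝ) = d * (2 * n + 3 : ℝ) ^ d := by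
    rw [Fintype.card_coe, Eb, Finset.card_product, card_box, Finset.card_univ, Fintype.card_fin]
    push_cast; ring
  have hB : ((Bb d n).card : ℝ) = (2 * n + 5 : ℝ) ^ d - (2 * n + 1) ^ d := by
    have hsub : box d n ⊆ box d (n+2) := fun x hx => box_mono (by omega) hx
    rw [Bb, Finset.card_sdiff_of_subset hsub, Nat.cast_sub (Finset.card_le_card hsub),
      card_box, card_box]
    push_cast; ring
  have h := expected_bridge (srcE n) (tgtE n) hp0 hp1 he he2 (Bb d n)
  rw [hE, hB] at h
  refine le_trans (mul_le_mul_of_nonneg_left ?_ hp0) h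
  -- sum over bonds
  have h1 : ∀ b : Eb d n, P.real (Dis (src b.1) (tgt b.1)) ≤
      ∑ a : Eb d n → Bool, if Bridge (srcE n) (tgtE n) (Bb d n) a b then W p a else 0 := by
    intro b
    rw [← Finset.sum_filter]
    simp only [← res_prob hP hp0 hp1]
    rw [sum_measureReal_preimage_singleton _
      (fun y _ => measurable_res n (measurableSet_singleton y))]
    refine measureReal_mono ?_
    rintro ω ⟨hi1, hi2, hn⟩
    have hb1 : src b.1 ∈ box d (n+1) := (Finset.mem_product.1 b.2).1
    have hb2 := (src_mem_of (Or.inl hb1)).2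
    obtain ⟨v, hv, hvc⟩ := escape (n := n) (box_mono (by omega : n+1 ≤ n+2) hb1) hi1
    obtain ⟨w, hw, hwc⟩ := escape (n := n) hb2 hi2
    simp only [Set.mem_preimage, Finset.coe_filter, Finset.mem_univ, true_and]
    exact ⟨⟨v, hv, hvc⟩, ⟨w, hw, hwc⟩, fun hc => hn (conn_of_res hc)⟩
  have h2 : (2 * n + 3 : ℝ) ^ d * P.real (Dis 0 (unitVec d i)) ≤
      ∑ b : Eb d n, P.real (Dis (src b.1) (tgt b.1)) := by
    rw [Finset.sum_coe_sort (Eb d n) (fun b => P.real (Dis (src b) (tgt b))), Eb,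
      Finset.sum_product]
    have h3 : ∀ x ∈ box d (n+1), P.real (Dis 0 (unitVec d i)) ≤
        ∑ j : Fin d, P.real (Dis (src (x, j)) (tgt (x, j))) := by
      intro x _
      refine le_trans (le_of_eq ?_) (Finset.single_le_sum
        (f := fun j => P.real (Dis (src (x, j)) (tgt (x, j))))
        (fun _ _ => measureReal_nonneg) (Finset.mem_univ i))
      have := (shift_mp hP x).measure_preimage (measurableSet_dis 0 (unitVec d i)).nullMeasurableSet
      rw [dis_shift] at this
      simp only [measureReal_def, src, tgt]
      rw [← this, zero_add, add_comm]
    refine le_trans (le_of_eq ?_) (Finset.sum_le_sum h3)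
    rw [Finset.sum_const, card_box, nsmul_eq_mul]
    push_cast; ring
  refine h2.trans ((Finset.sum_le_sum fun b _ => h1 b).trans (le_of_eq ?_))
  rw [Finset.sum_comm]
  refine Finset.sum_congr rfl fun a _ => ?_
  rw [← Finset.sum_filter, Finset.sum_const, nsmul_eq_mul, mul_comm]

lemma edge_null (hP : IsBernoulli d p P) (hp0 : 0 < p) (hp1 : p ≤ 1) (i : Fin d) :
    P (Dis 0 (unitVec d i)) = 0 := by
  haveI := hP.1
  set D := P.real (Dis 0 (unitVec d i)) with hD
  have hd : d ≠ 0 := by have := i.2; omega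
  have step1 : ∀ ε : ℝ, 0 < ε → ε ≤ 1/2 → p * D ≤ 6 * ε * d := by
    intro ε he he2
    have hu : Tendsto (fun n : ℕ => (1 : ℝ) / (2 * n + 3)) atTop (𝓝 0) := by
      have h := tendsto_one_div_add_atTop_nhds_zero_nat (𝕜 := ℝ)
      refine squeeze_zero (fun n => by positivity) (fun n => ?_) h
      refine one_div_le_one_div_of_le (by positivity) ?_
      have : (0:ℝ) ≤ n := by positivity
      linarith
    have hc : Tendsto (fun u : ℝ => 6 * ε * d + (((1 + 2 * u)^d - (1 - 2*u)^d) + u^d)/ε) (𝓝 0)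
        (𝓝 (6 * ε * d)) := by
      have hcont : Continuous (fun u : ℝ => 6 * ε * d + (((1 + 2 * u)^d - (1 - 2*u)^d) + u^d)/ε) := by
        fun_prop
      have := hcont.tendsto 0
      simpa [hd] using this
    refine ge_of_tendsto' (hc.comp hu) fun n => ?_
    have h := finite_bound hP hp0.le hp1 i n he he2
    have hm : (0:ℝ) < (2 * n + 3 : ℝ) := by positivity
    have hmd : (0:ℝ) < (2 * n + 3 : ℝ) ^ d := by positivity
    have e1 : (1 + 2 * (1 / (2 * n + 3 : ℝ))) = (2 * n + 5) / (2 * n + 3) := by field_simp; ring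
    have e2 : (1 - 2 * (1 / (2 * n + 3 : ℝ))) = (2 * n + 1) / (2 * n + 3) := by field_simp; ring
    simp only [Function.comp_def, e1, e2, div_pow, one_pow]
    have e3 : 6 * ε * d + (((2 * n + 5 : ℝ) ^ d / (2 * n + 3) ^ d - (2 * n + 1) ^ d / (2 * n + 3) ^ d)
        + 1 / (2 * n + 3) ^ d) / ε = (6 * ε * (d * (2 * n + 3 : ℝ) ^ d)
          + (((2 * n + 5 : ℝ) ^ d - (2 * n + 1) ^ d) + 1) / ε) / (2 * n + 3) ^ d := by
      field_simp
    rw [e3, le_div_iff₀ hmd]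
    linarith
  have hD0 : p * D ≤ 0 := by
    have hc : Tendsto (fun ε : ℝ => 6 * ε * d) (𝓝[>] 0) (𝓝 0) := by
      have hcont : Continuous (fun ε : ℝ => 6 * ε * d) := by fun_prop
      have := (hcont.tendsto 0).mono_left (nhdsWithin_le_nhds (s := Set.Ioi 0))
      simpa using this
    refine ge_of_tendsto hc ?_
    filter_upwards [Ioc_mem_nhdsGT (show (0:ℝ) < 1/2 by norm_num)] with ε hε
    exact step1 ε hε.1 hε.2
  have hDn : 0 ≤ D := measureReal_nonneg
  have : D = 0 := by nlinarith
  rwa [hD, measureReal_eq_zero_iff] at this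

lemma bond_null (hP : IsBernoulli d p P) (hp0 : 0 < p) (hp1 : p ≤ 1) (b : EdgeIx d) :
    P (Dis (src b) (tgt b)) = 0 := by
  have := (shift_mp hP b.1).measure_preimage (measurableSet_dis 0 (unitVec d b.2)).nullMeasurableSet
  rw [dis_shift, edge_null hP hp0 hp1, zero_add, add_comm] at this
  exact this

lemma Dis_symm (x y : V d) : Dis x y = Dis y x := by
  ext ω
  exact ⟨fun h => ⟨h.2.1, h.1, fun hc => h.2.2 hc.symm⟩, fun h => ⟨h.2.1, h.1, fun hc => h.2.2 hc.symm⟩⟩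

/-- Uniqueness along lattice paths. -/
lemma dis_null_of_path (hP : IsBernoulli d p P) (hp0 : 0 < p) (hp1 : p ≤ 1) {x y : V d}
    (h : Co (fun _ => true) x y) : P (Dis x y) = 0 := by
  classical
  unfold Co Conn at h
  induction h using Relation.ReflTransGen.head_induction_on with
  | refl =>
    have : Dis y y = ∅ := by
      ext ω
      exact ⟨fun h => h.2.2 (Conn.refl _ _), fun h => h.elim⟩
    rw [this]; simp
  | @head x x' h1 _ ih =>
    obtain ⟨b, _, hb⟩ := h1
    have hxx : P (Dis x x') = 0 := by
      rcases hb with ⟨rfl, rfl⟩ | ⟨rfl, rfl⟩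
      · exact bond_null hP hp0 hp1 b
      · rw [Dis_symm]; exact bond_null hP hp0 hp1 b
    have hins := insert_null hP hp0 b ih
    refine measure_mono_null ?_ (measure_union_null hxx (measure_union_null ih hins))
    rintro ω ⟨hx, hy, hn⟩
    by_cases hx' : Inf ω x'
    · by_cases hc : Co ω x x'
      · exact Or.inr (Or.inl ⟨hx', hy, fun h => hn (hc.trans h)⟩)
      · exact Or.inl ⟨hx, hx', hc⟩
    · refine Or.inr (Or.inr ?_)
      have hmono : ∀ c, ω c = true → Function.update ω b true c = true := by
        intro c hc
        by_cases h : c = b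
        · subst h; simp
        · rwa [Function.update_of_ne h]
      have hxx' : Co (Function.update ω b true) x x' :=
        Relation.ReflTransGen.single ⟨b, by simp, hb⟩
      refine ⟨(hx.mono hmono).congr hxx', hy.mono hmono, fun hc => ?_⟩
      have hx'y : ¬ Co ω x' y := fun h => hx' (hy.congr h.symm)
      rcases conn_insert hc with h | h | h
      · exact hx'y h
      · rcases hb with ⟨rfl, rfl⟩ | ⟨rfl, rfl⟩
        · exact hn h
        · exact hx'y h
      · rcases hb with ⟨rfl, rfl⟩ | ⟨rfl, rfl⟩
        · exact hx'y h
        · exact hn h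

lemma full_conn (x y : V d) : Co (fun _ => true) x y := by
  let S : AddSubgroup (V d) :=
    { carrier := {v | ∀ z : V d, Co (fun _ => true) z (z + v)}
      zero_mem' := fun z => by simpa using Conn.refl _ _
      add_mem' := fun {a b} ha hb z => by
        have := (ha z).trans (hb (z + a))
        rwa [add_assoc] at this
      neg_mem' := fun {a} ha z => by
        have := ha (z + -a)
        rw [neg_add_cancel_right] at this
        exact this.symm }
  have hu : ∀ i, unitVec d i ∈ S := fun i z => Conn.edge (b := ((z, i) : EdgeIx d)) rfl
  have hv : y - x ∈ S := by
    have : y - x = ∑ i, (y - x) i • unitVec d i := by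
      funext j
      simp [Finset.sum_apply, unitVec]
    rw [this]
    exact S.sum_mem fun i _ => S.zsmul_mem (hu i) _
  have := hv x
  rwa [add_sub_cancel] at this

lemma uniqueness (hP : IsBernoulli d p P) (hp0 : 0 < p) (hp1 : p ≤ 1) :
    ∀ᵐ ω ∂P, ∀ x y, Inf ω x → Inf ω y → Co ω x y := by
  rw [ae_all_iff]; intro x
  rw [ae_all_iff]; intro y
  have := dis_null_of_path hP hp0 hp1 (full_conn x y)
  rw [← compl_compl (Dis x y), ← mem_ae_iff] at this
  filter_upwards [this] with ω h hx hy
  by_contra hc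
  exact h ⟨hx, hy, hc⟩

end lattice
end SRWPC

namespace SRWPC
open FinPerc

section final
variable {d : ℕ}

lemma edgeOpen_iff {ω : Config d} {x e : V d} : edgeOpen ω x e ↔ Adj src tgt ω x (x + e) := by
  constructor
  · rintro ⟨i, ⟨rfl, h⟩ | ⟨rfl, h⟩⟩
    · exact ⟨(x, i), h, Or.inl ⟨rfl, rfl⟩⟩
    · refine ⟨(x - unitVec d i, i), h, Or.inr ⟨?_, ?_⟩⟩
      · simp [src, sub_eq_add_neg]
      · simp [tgt]
  · rintro ⟨⟨y, i⟩, h, ⟨h1, h2⟩ | ⟨h1, h2⟩⟩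
    · simp only [src, tgt] at h1 h2
      subst h1
      exact ⟨i, Or.inl ⟨(add_left_cancel h2).symm, h⟩⟩
    · simp only [src, tgt] at h1 h2
      have he : e = -unitVec d i := by
        rw [h1, add_assoc] at h2
        have : e + unitVec d i = 0 := by simpa using h2
        exact eq_neg_of_add_eq_zero_left this
      refine ⟨i, Or.inr ⟨he, ?_⟩⟩
      rw [he] at h1
      rw [sub_eq_add_neg, ← h1]; exact h

lemma edgeOpen.mem {ω : Config d} {x e : V d} (h : edgeOpen ω x e) : e ∈ Ud d := by
  obtain ⟨i, ⟨rfl, _⟩ | ⟨rfl, _⟩⟩ := h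
  · exact Finset.mem_union_left _ (Finset.mem_image_of_mem _ (Finset.mem_univ _))
  · exact Finset.mem_union_right _
      (Finset.mem_image_of_mem (fun i => -unitVec d i) (Finset.mem_univ i))

lemma trans_pos_iff {ω : Config d} {x e : V d} : 0 < trans ω x e ↔ edgeOpen ω x e := by
  classical
  unfold trans
  split_ifs with h
  · have : 0 < openDeg ω x := Finset.card_pos.2 ⟨e, Finset.mem_filter.2 ⟨h.mem, h⟩⟩
    simp only [h, iff_true]
    positivity
  · simp [h]

lemma path_co {ω : Config d} {γ : ℕ → V d} {n : ℕ} (h : IsOpenPath ω γ n) :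
    ∀ k ≤ n, Co ω (γ 0) (γ k) := by
  intro k
  induction k with
  | zero => intro _; exact Conn.refl _ _
  | succ k ih =>
    intro hk
    have h1 := edgeOpen_iff.1 (h k (by omega)).2
    rw [add_sub_cancel] at h1
    exact Conn.trans (ih (by omega)) (Relation.ReflTransGen.single h1)

lemma co_path {ω : Config d} {x y : V d} (h : Co ω x y) :
    ∃ (γ : ℕ → V d) (n : ℕ), γ 0 = x ∧ IsOpenPath ω γ n ∧ γ n = y := by
  unfold Co Conn at h
  induction h with
  | refl => exact ⟨fun _ => x, 0, rfl, fun k hk => absurd hk (by omega), rfl⟩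
  | @tail u v _ h2 ih =>
    obtain ⟨γ, n, h0, hp, hn⟩ := ih
    have ho : edgeOpen ω u (v - u) := by rw [edgeOpen_iff, add_sub_cancel]; exact h2
    refine ⟨fun k => if k ≤ n then γ k else v, n + 1, by simp [h0], ?_, by simp⟩
    intro k hk
    rcases Nat.lt_or_ge k n with hkn | hkn
    · simp only [show k ≤ n by omega, show k + 1 ≤ n by omega, if_true]
      exact hp k hkn
    · have : k = n := by omega
      subst this
      simp only [le_refl, if_true, show ¬ (k + 1 ≤ k) by omega, if_false, hn]
      exact ⟨ho.mem, ho⟩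

lemma inBox_iff {x : V d} {R : ℕ} : inBox x R ↔ x ∈ box d R := by
  unfold inBox
  rw [mem_box]
  refine forall_congr' fun i => ?_
  rw [abs_le]
  constructor
  · rintro ⟨h1, h2⟩; exact ⟨by exact_mod_cast h1, by exact_mod_cast h2⟩
  · rintro ⟨h1, h2⟩; exact ⟨by exact_mod_cast h1, by exact_mod_cast h2⟩

lemma subset_box (F : Finset (V d)) : ∃ R : ℕ, F ⊆ box d R := by
  refine ⟨∑ x ∈ F, ∑ i, (x i).natAbs, fun x hx => mem_box.2 fun i => ?_⟩
  have h1 : (x i).natAbs ≤ ∑ i, (x i).natAbs :=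
    Finset.single_le_sum (f := fun i => (x i).natAbs) (fun _ _ => Nat.zero_le _) (Finset.mem_univ i)
  have h2 : ∑ i, (x i).natAbs ≤ ∑ x ∈ F, ∑ i, (x i).natAbs :=
    Finset.single_le_sum (f := fun x : V d => ∑ i, (x i).natAbs) (fun _ _ => Nat.zero_le _) hx
  omega

lemma memCluster_iff {ω : Config d} {x : V d} : memCluster ω x ↔ Inf ω x := by
  rw [inf_iff]
  constructor
  · intro h F
    obtain ⟨R, hR⟩ := subset_box F
    obtain ⟨γ, n, h0, hp, hb⟩ := h R
    refine ⟨γ n, fun hF => hb (inBox_iff.2 (hR hF)), ?_⟩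
    rw [← h0]; exact path_co hp n le_rfl
  · intro h R
    obtain ⟨y, hy, hc⟩ := h (box d R)
    obtain ⟨γ, n, h0, hp, hn⟩ := co_path hc
    exact ⟨γ, n, h0, hp, by rw [hn, inBox_iff]; exact hy⟩

lemma cluZero_eq : cluZero d = {ω : Config d | Inf ω 0} := by
  ext ω; exact memCluster_iff

lemma measurableSet_cluZero : MeasurableSet (cluZero d) := by
  rw [cluZero_eq]; exact measurableSet_inf 0

lemma edgeOpen_shift {ω : Config d} {x e : V d} : edgeOpen (shift x ω) 0 e ↔ edgeOpen ω x e := by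
  unfold edgeOpen shift
  simp [sub_eq_add_neg, add_comm]

/-- Every event closed under open steps (a.s. on the cluster) has probability one. -/
lemma erg {p : ℝ} {P : Measure (Config d)} (hd : 0 < d) (hP : IsBernoulli d p P)
    (hp0 : 0 < p) (hp1 : p ≤ 1) {A : Set (Config d)} (hA : MeasurableSet A)
    (hpos : P (cluZero d ∩ A) ≠ 0)
    (hinv : ∀ᵐ ω ∂P, Inf ω 0 → ω ∈ A → ∀ e, edgeOpen ω 0 e → shift e ω ∈ A) :
    ∀ᵐ ω ∂P, Inf ω 0 → ω ∈ A := by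
  haveI := hP.1
  have hall : ∀ᵐ ω ∂P, ∀ x : V d, Inf ω x → shift x ω ∈ A → ∀ e, edgeOpen ω x e →
      shift (x + e) ω ∈ A := by
    rw [ae_all_iff]
    intro x
    have := (shift_mp hP x).quasiMeasurePreserving.ae hinv
    filter_upwards [this] with ω h hi ha e he
    have := h (inf_shift.2 (by rwa [zero_add])) ha e (edgeOpen_shift.2 he)
    rwa [shift_shift, add_comm] at this
  let B : Set (Config d) := {ω | ∃ x, Inf ω x ∧ shift x ω ∈ A}
  have hB : MeasurableSet B := by
    have : B = ⋃ x, ({ω | Inf ω x} ∩ shift x ⁻¹' A) := by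
      ext ω; simp [B]
    rw [this]
    exact MeasurableSet.iUnion fun x => (measurableSet_inf x).inter (measurable_shift x hA)
  have hBsub : ∀ z : V d, ∀ ω, shift z ω ∈ B → ω ∈ B := by
    rintro z ω ⟨x, hx, ha⟩
    exact ⟨x + z, inf_shift.1 hx, by rwa [shift_shift] at ha⟩
  have hBinv : ∀ z : V d, shift z ⁻¹' B = B := by
    intro z
    ext ω
    refine ⟨hBsub z ω, fun h => hBsub (-z) _ ?_⟩
    rwa [shift_shift, neg_add_cancel, shift_zero]
  have hBpos : P B ≠ 0 := by
    intro h0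
    apply hpos
    refine measure_mono_null ?_ h0
    rintro ω ⟨h1, h2⟩
    exact ⟨0, memCluster_iff.1 h1, by rwa [shift_zero]⟩
  have hB1 := zero_one hd hP hp0.le hp1 hB hBinv hBpos
  have hBae : ∀ᵐ ω ∂P, ω ∈ B := by
    rw [ae_iff_prob_eq_one (p := fun ω => ω ∈ B) (measurableSet_setOf.1 hB)]
    rw [measureReal_def, ENNReal.toReal_eq_one_iff] at hB1
    exact hB1
  filter_upwards [hall, hBae, uniqueness hP hp0 hp1] with ω h hb hu h0
  obtain ⟨x, hx, ha⟩ := hb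
  have hc := hu x 0 hx h0
  have key : ∀ y, Co ω x y → shift y ω ∈ A := by
    intro y hy
    unfold Co Conn at hy
    induction hy with
    | refl => exact ha
    | @tail u v h1 h2 ih =>
      have := h u (hx.congr h1) ih (v - u) (by rw [edgeOpen_iff, add_sub_cancel]; exact h2)
      rwa [add_sub_cancel] at this
  have := key 0 hc
  rwa [shift_zero] at this

/-- The support of an invariant density is closed under allowed steps. -/
lemma step_closed {P₀ Q : Measure (Config d)} [IsProbabilityMeasure P₀] [IsProbabilityMeasure Q]
    {κ : Config d → Step d → ℝ} (hκ : κ ∈ PiT d P₀) (hac : Q ≪ P₀) (hinv : IsInvariant κ Q) :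
    ∀ᵐ ω ∂P₀, 0 < Q.rnDeriv P₀ ω → ∀ e : Step d, 0 < trans ω 0 e.1 →
      0 < Q.rnDeriv P₀ (shift e.1 ω) := by
  haveI : Q.HaveLebesgueDecomposition P₀ := Measure.haveLebesgueDecomposition_of_sigmaFinite Q P₀
  obtain ⟨hm, hnn, hle, -, hz⟩ := hκ
  have hmA : MeasurableSet {ω | 0 < Q.rnDeriv P₀ ω} :=
    measurableSet_lt measurable_const (Measure.measurable_rnDeriv _ _)
  have hwd : P₀.withDensity (Q.rnDeriv P₀) = Q := Measure.withDensity_rnDeriv_eq _ _ hac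
  set A := {ω | 0 < Q.rnDeriv P₀ ω} with hAdef
  have hQA : ∀ᵐ ω ∂Q, ω ∈ A := Measure.rnDeriv_pos hac
  let f : Config d → ℝ := Aᶜ.indicator 1
  have hf : Measurable f := measurable_one.indicator hmA.compl
  have hf0 : ∀ ω, 0 ≤ f ω := fun ω => Set.indicator_nonneg (fun _ _ => zero_le_one) ω
  have hf1 : ∀ ω, f ω ≤ 1 := fun ω => Set.indicator_le_self' (fun _ _ => zero_le_one) ω
  have h1 := hinv f hf ⟨1, fun ω => by rw [abs_of_nonneg (hf0 ω)]; exact hf1 ω⟩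
  have h2 : ∫ ω, f ω ∂Q = 0 := by
    rw [integral_eq_zero_of_ae]
    filter_upwards [hQA] with ω h
    simp [f, h]
  rw [h2] at h1
  have hmt : ∀ e : Step d, Measurable fun ω => κ ω e * f (shift e.1 ω) := fun e =>
    (hm e).mul (hf.comp (measurable_shift e.1))
  have hintg : Integrable (kernelStep κ f) Q := by
    unfold kernelStep
    refine integrable_finset_sum _ fun e _ => ?_
    refine Integrable.of_bound (hmt e).aestronglyMeasurable 1 ?_
    filter_upwards [hac.ae_le (hle e)] with ω h
    rw [Real.norm_eq_abs, abs_of_nonneg (mul_nonneg (hnn _ _) (hf0 _))]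
    exact mul_le_one₀ h (hf0 _) (hf1 _)
  have hk0 : ∀ ω, 0 ≤ kernelStep κ f ω := fun ω =>
    Finset.sum_nonneg fun e _ => mul_nonneg (hnn _ _) (hf0 _)
  have h3 := (integral_eq_zero_iff_of_nonneg hk0 hintg).1 h1
  have h4 : ∀ᵐ ω ∂Q, ∀ e : Step d, κ ω e ≠ 0 → shift e.1 ω ∈ A := by
    filter_upwards [h3] with ω h e he
    have h5 := (Finset.sum_eq_zero_iff_of_nonneg
      (fun e _ => mul_nonneg (hnn ω e) (hf0 (shift e.1 ω)))).1 h e (Finset.mem_univ e)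
    by_contra hn
    have : f (shift e.1 ω) = 1 := by simp [f, hn]
    rw [this, mul_one] at h5
    exact he h5
  rw [← hwd, ae_withDensity_iff (Measure.measurable_rnDeriv _ _)] at h4
  filter_upwards [h4, ae_all_iff.2 hz] with ω h h' hpos e he
  exact h hpos.ne' e (fun h0 => he.ne' ((h' e).1 h0))

end final
end SRWPC

open SRWPC in
/-- **Equivalence of invariant measures with the conditional percolation law**
(Step 1 in the proof of Theorem 3.2). -/
theorem invariant_measure_equivalent
    (d : ℕ) (hd : 2 ≤ d) (p : ℝ) (hp0 : 0 < p) (hp1 : p < 1) (hpc : pc d < p)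
    (P : Measure (Config d)) (hP : IsBernoulli d p P)
    (κ : Config d → Step d → ℝ) (hκ : κ ∈ PiT d (P[|cluZero d]))
    (Q : Measure (Config d)) (hQprob : IsProbabilityMeasure Q)
    (hQac : Q ≪ (P[|cluZero d])) (hQinv : IsInvariant κ Q) :
    (∀ᵐ ω ∂((P[|cluZero d])[|{ω' | 0 < Q.rnDeriv (P[|cluZero d]) ω'}]),
      ∀ e : Step d, 0 < trans ω 0 e.1 →
        0 < Q.rnDeriv (P[|cluZero d]) (shift e.1 ω)) ∧
    (P[|cluZero d]) {ω' | 0 < Q.rnDeriv (P[|cluZero d]) ω'} = 1 ∧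
    (P[|cluZero d]) ≪ Q := by
  haveI := hP.1
  have hC : P (cluZero d) ≠ 0 := by
    intro h0
    have : P[|cluZero d] = 0 := cond_eq_zero_of_meas_eq_zero h0
    rw [this, Measure.absolutelyContinuous_zero_iff] at hQac
    exact IsProbabilityMeasure.ne_zero Q hQac
  haveI hP0 : IsProbabilityMeasure (P[|cluZero d]) := cond_isProbabilityMeasure hC
  haveI : Q.HaveLebesgueDecomposition (P[|cluZero d]) :=
    Measure.haveLebesgueDecomposition_of_sigmaFinite Q _
  have hst := step_closed hκ hQac hQinv
  have hcl : ∀ {q : Config d → Prop}, (∀ᵐ ω ∂P[|cluZero d], q ω) ↔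
      ∀ᵐ ω ∂P, ω ∈ cluZero d → q ω := by
    intro q
    rw [ProbabilityTheory.cond, Measure.ae_ennreal_smul_measure_iff
      (ENNReal.inv_ne_zero.2 (measure_ne_top _ _)), ae_restrict_iff' measurableSet_cluZero]
  have hmA : MeasurableSet {ω | 0 < Q.rnDeriv (P[|cluZero d]) ω} :=
    measurableSet_lt measurable_const (Measure.measurable_rnDeriv _ _)
  have hpos : P (cluZero d ∩ {ω | 0 < Q.rnDeriv (P[|cluZero d]) ω}) ≠ 0 := by
    intro h0
    have h1 : ∀ᵐ ω ∂P[|cluZero d], ¬ (0 < Q.rnDeriv (P[|cluZero d]) ω) := by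
      rw [hcl]
      filter_upwards [measure_eq_zero_iff_ae_notMem.1 h0] with ω h hc ha
      exact h ⟨hc, ha⟩
    have h2 := hQac.ae_le h1
    have h3 : ∀ᵐ ω ∂Q, False := by
      filter_upwards [h2, Measure.rnDeriv_pos hQac] with ω h h' using h h'
    simp only [eventually_false_iff_eq_bot, ae_eq_bot] at h3
    exact IsProbabilityMeasure.ne_zero Q h3
  have hae : ∀ᵐ ω ∂P[|cluZero d], 0 < Q.rnDeriv (P[|cluZero d]) ω := by
    rw [hcl]
    have := erg (by omega) hP hp0 hp1.le hmA hpos (by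
      filter_upwards [hcl.1 hst] with ω h hi ha e he
      exact h (memCluster_iff.2 hi) ha ⟨e, he.mem⟩ (trans_pos_iff.2 he))
    filter_upwards [this] with ω h hc using h (memCluster_iff.1 hc)
  refine ⟨?_, ?_, ?_⟩
  · refine (cond_absolutelyContinuous (μ := P[|cluZero d])).ae_le ?_
    filter_upwards [hst, hae] with ω h h' using h h'
  · exact (ae_iff_prob_eq_one (p := fun ω => 0 < Q.rnDeriv (P[|cluZero d]) ω)
      (measurableSet_setOf.1 hmA)).1 hae
  · have := withDensity_absolutelyContinuous' (μ := P[|cluZero d])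
      (Measure.measurable_rnDeriv Q (P[|cluZero d])).aemeasurable
      (hae.mono fun ω h => h.ne')
    rwa [Measure.withDensity_rnDeriv_eq _ _ hQac] at this
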